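/- arXiv:2403.13172 — 10 statements merged into one kernel-verified Lean document; each statement's English description precedes it below -/
import Mathlib

section
/- Let G be a tree on n vertices with maximum degree Δ ≥ 3. Then the identification number of G satisfies γ^ID(G) ≤ ((Δ−1)/Δ)·n + 1/Δ. -/
open SimpleGraph

/-- The closed neighborhood `N[v]` of a vertex `v` in `G`. -/
def closedNbhd {V : Type*} (G : SimpleGraph V) (v : V) : Set V :=
  insert v (G.neighborSet v)

/-- `C` is an identifying code of `G`: it dominates every vertex and the
closed neighborhoods of distinct vertices intersect `C` differently. -/
def IsIDCode {V : Type*} (G : SimpleGraph V) (C : Set V) : Prop :=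
  (∀ v, (closedNbhd G v ∩ C).Nonempty) ∧
  ∀ u w : V, u ≠ w → closedNbhd G u ∩ C ≠ closedNbhd G w ∩ C

/-- The identification number `γ^ID(G)`: the minimum size of an identifying code. -/
noncomputable def idNum {V : Type*} [Fintype V] (G : SimpleGraph V) : ℕ :=
  sInf {k | ∃ C : Set V, C.ncard = k ∧ IsIDCode G C}

/-- `G` is identifiable (closed-twin-free). -/
def Identifiable {V : Type*} (G : SimpleGraph V) : Prop :=
  ∀ u w : V, u ≠ w → closedNbhd G u ≠ closedNbhd G w

/-- The maximum degree of a finite graph `G`. -/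
noncomputable def maxDeg {V : Type*} [Fintype V] (G : SimpleGraph V) : ℕ :=
  Finset.univ.sup fun v => (G.neighborSet v).ncard

/-- `S` is a dominating set of `G`. -/
def IsDomSet {V : Type*} (G : SimpleGraph V) (S : Set V) : Prop :=
  ∀ v, (closedNbhd G v ∩ S).Nonempty

/-- The domination number `γ(G)`. -/
noncomputable def domNum {V : Type*} [Fintype V] (G : SimpleGraph V) : ℕ :=
  sInf {k | ∃ S : Set V, S.ncard = k ∧ IsDomSet G S}

/-- The star `K_{1,k}`: vertex `0` is adjacent to each of the `k` other vertices. -/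
def starGraph (k : ℕ) : SimpleGraph (Fin (k + 1)) :=
  SimpleGraph.fromRel fun a _ => a = 0

/-- The graph obtained from `G'` by appending a star with `k` extra leaves onto the
vertex `v`: we add a new universal vertex `u = Sum.inr none` adjacent to `v`,
and `k` new leaves `Sum.inr (some i)` adjacent to `u` (so the star has `k + 1`
leaves in total, one of which is identified with `v`, i.e. a `(k+1)`-star is
appended by one of its leaves onto `v`). -/
def appendStar {V : Type*} (G' : SimpleGraph V) (v : V) (k : ℕ) :
    SimpleGraph (V ⊕ Option (Fin k)) :=
  SimpleGraph.fromRel fun a b =>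
    (∃ x y, a = Sum.inl x ∧ b = Sum.inl y ∧ G'.Adj x y) ∨
    (a = Sum.inl v ∧ b = Sum.inr none) ∨
    (∃ i, a = Sum.inr none ∧ b = Sum.inr (some i))

namespace IDTree

set_option linter.unusedVariables false
set_option linter.unusedSectionVars false

variable {V : Type*}

/-- Code word of `v` inside the vertex set `W`, where `U` is the set of non-code vertices. -/
def wd (G : SimpleGraph V) (W U : Set V) (v : V) : Set V :=
  {x | x ∈ W ∧ x ∉ U ∧ (x = v ∨ G.Adj v x)}

/-- All vertices but the root `r` are dominated and separated inside `W`. -/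
structure Base (G : SimpleGraph V) (W U : Set V) (r : V) : Prop where
  sub : U ⊆ W
  ne : ∀ v ∈ W, v ≠ r → (wd G W U v).Nonempty
  sep : ∀ u ∈ W, ∀ v ∈ W, u ≠ r → v ≠ r → u ≠ v → wd G W U u ≠ wd G W U v

/-- The root is not in the code; flags: its word is nonempty, its word is separated. -/
structure SU (G : SimpleGraph V) (W U : Set V) (r : V) (n s : Bool) : Prop where
  base : Base G W U r
  mem : r ∈ U
  hn : n = true → (wd G W U r).Nonempty
  hs : s = true → ∀ v ∈ W, v ≠ r → wd G W U v ≠ wd G W U r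

/-- The root is in the code; flags: it has a code neighbour, no other vertex has word `{r}`,
its word is separated. -/
structure SC (G : SimpleGraph V) (W U : Set V) (r : V) (h f s : Bool) : Prop where
  base : Base G W U r
  mem : r ∉ U
  hh : h = true → wd G W U r ≠ {r}
  hf : f = true → ∀ v ∈ W, v ≠ r → wd G W U v ≠ {r}
  hs : s = true → ∀ v ∈ W, v ≠ r → wd G W U v ≠ wd G W U r

/-- `G` restricted to `W₁ ∪ W₂` arises from `H` by adding the edge `r₁ r₂`. -/
structure Gr (H G : SimpleGraph V) (W₁ W₂ : Set V) (r₁ r₂ : V) : Prop where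
  disj : ∀ x ∈ W₁, x ∉ W₂
  m1 : r₁ ∈ W₁
  m2 : r₂ ∈ W₂
  adj : ∀ x y, G.Adj x y ↔ H.Adj x y ∨ (x = r₁ ∧ y = r₂) ∨ (x = r₂ ∧ y = r₁)
  nadj : ∀ x ∈ W₁, ∀ y ∈ W₂, ¬ H.Adj x y

variable {H G : SimpleGraph V} {W₁ W₂ U₁ U₂ : Set V} {r₁ r₂ : V}

lemma Gr.symm (g : Gr H G W₁ W₂ r₁ r₂) : Gr H G W₂ W₁ r₂ r₁ where
  disj x h h' := g.disj x h' h
  m1 := g.m2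
  m2 := g.m1
  adj x y := by rw [g.adj x y]; tauto
  nadj x hx y hy h := g.nadj y hy x hx h.symm

lemma wd_sub {W U : Set V} {v : V} : wd G W U v ⊆ W := fun _ hx => hx.1

lemma Gr.w1 (g : Gr H G W₁ W₂ r₁ r₂) (_h1 : U₁ ⊆ W₁) (h2 : U₂ ⊆ W₂) {v : V} (hv : v ∈ W₁)
    (hr : v ≠ r₁) : wd G (W₁ ∪ W₂) (U₁ ∪ U₂) v = wd H W₁ U₁ v := by
  have := g.disj; have := g.m1; have := g.m2; have := g.nadj
  ext x
  simp only [wd, Set.mem_ofPred_eq, Set.mem_union, g.adj]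
  grind

lemma Gr.wU (g : Gr H G W₁ W₂ r₁ r₂) (h1 : U₁ ⊆ W₁) (h2 : U₂ ⊆ W₂) (hr : r₂ ∈ U₂) :
    wd G (W₁ ∪ W₂) (U₁ ∪ U₂) r₁ = wd H W₁ U₁ r₁ := by
  have := g.disj; have := g.m1; have := g.m2; have := g.nadj
  ext x
  simp only [wd, Set.mem_ofPred_eq, Set.mem_union, g.adj]
  grind

lemma Gr.wC (g : Gr H G W₁ W₂ r₁ r₂) (h1 : U₁ ⊆ W₁) (h2 : U₂ ⊆ W₂) (hr : r₂ ∉ U₂) :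
    wd G (W₁ ∪ W₂) (U₁ ∪ U₂) r₁ = insert r₂ (wd H W₁ U₁ r₁) := by
  have := g.disj; have := g.m1; have := g.m2; have := g.nadj
  ext x
  simp only [wd, Set.mem_ofPred_eq, Set.mem_union, Set.mem_insert_iff, g.adj]
  grind

/-- Words lying in disjoint sets, one of them nonempty, are different. -/
lemma Gr.ne_of (g : Gr H G W₁ W₂ r₁ r₂) {A B : Set V} (hA : A ⊆ W₁) (hB : B ⊆ W₂)
    (hn : A.Nonempty ∨ B.Nonempty) : A ≠ B := by
  rintro rfl
  rcases hn with ⟨x, hx⟩ | ⟨x, hx⟩ <;> exact g.disj x (hA hx) (hB hx)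

/-- General criterion for the base property after grafting. -/
lemma Gr.base (g : Gr H G W₁ W₂ r₁ r₂) (b1 : Base H W₁ U₁ r₁) (b2 : Base H W₂ U₂ r₂)
    (hne : (wd G (W₁ ∪ W₂) (U₁ ∪ U₂) r₂).Nonempty)
    (h1 : ∀ v ∈ W₁, v ≠ r₁ → wd H W₁ U₁ v ≠ wd G (W₁ ∪ W₂) (U₁ ∪ U₂) r₂)
    (h2 : ∀ v ∈ W₂, v ≠ r₂ → wd H W₂ U₂ v ≠ wd G (W₁ ∪ W₂) (U₁ ∪ U₂) r₂) :
    Base G (W₁ ∪ W₂) (U₁ ∪ U₂) r₁ := by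
  have e1 := fun v hv hr => g.w1 b1.sub b2.sub (v := v) hv hr
  have e2 : ∀ v, v ∈ W₂ → v ≠ r₂ → wd G (W₁ ∪ W₂) (U₁ ∪ U₂) v = wd H W₂ U₂ v := by
    intro v hv hr
    have := g.symm.w1 b2.sub b1.sub (v := v) hv hr
    rwa [Set.union_comm W₂, Set.union_comm U₂] at this
  refine ⟨Set.union_subset_union b1.sub b2.sub, ?_, ?_⟩
  · rintro v (hv | hv) hr
    · rw [e1 v hv hr]; exact b1.ne v hv hr
    · by_cases h : v = r₂
      · rw [h]; exact hne
      · rw [e2 v hv h]; exact b2.ne v hv h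
  · have key : ∀ v ∈ W₁ ∪ W₂, v ≠ r₁ → v ≠ r₂ →
        wd G (W₁ ∪ W₂) (U₁ ∪ U₂) v ≠ wd G (W₁ ∪ W₂) (U₁ ∪ U₂) r₂ := by
      rintro v (hv | hv) hr hr'
      · rw [e1 v hv hr]; exact h1 v hv hr
      · rw [e2 v hv hr']; exact h2 v hv hr'
    intro u hu v hv hur hvr huv
    by_cases hu2 : u = r₂
    · subst hu2; exact (key v hv hvr (Ne.symm huv)).symm
    by_cases hv2 : v = r₂
    · subst hv2; exact key u hu hur hu2
    rcases hu with hu | hu <;> rcases hv with hv | hv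
    · rw [e1 u hu hur, e1 v hv hvr]; exact b1.sep u hu v hv hur hvr huv
    · rw [e1 u hu hur, e2 v hv hv2]
      exact g.ne_of wd_sub wd_sub (Or.inl (b1.ne u hu hur))
    · rw [e2 u hu hu2, e1 v hv hvr]
      exact (g.ne_of wd_sub wd_sub (Or.inl (b1.ne v hv hvr))).symm
    · rw [e2 u hu hu2, e2 v hv hv2]; exact b2.sep u hu v hv hu2 hv2 huv

/-- Words of the vertices other than the new root, compared with a fixed set `A`. -/
lemma Gr.cmp (g : Gr H G W₁ W₂ r₁ r₂) (b1 : Base H W₁ U₁ r₁) (b2 : Base H W₂ U₂ r₂) (A : Set V)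
    (h0 : wd G (W₁ ∪ W₂) (U₁ ∪ U₂) r₂ ≠ A)
    (h1 : ∀ v ∈ W₁, v ≠ r₁ → wd H W₁ U₁ v ≠ A)
    (h2 : ∀ v ∈ W₂, v ≠ r₂ → wd H W₂ U₂ v ≠ A) :
    ∀ v ∈ W₁ ∪ W₂, v ≠ r₁ → wd G (W₁ ∪ W₂) (U₁ ∪ U₂) v ≠ A := by
  rintro v (hv | hv) hr
  · rw [g.w1 b1.sub b2.sub hv hr]; exact h1 v hv hr
  · by_cases h : v = r₂
    · rw [h]; exact h0
    · have := g.symm.w1 b2.sub b1.sub (v := v) hv h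
      rw [Set.union_comm W₂, Set.union_comm U₂] at this
      rw [this]; exact h2 v hv h

lemma Gr.wU' (g : Gr H G W₁ W₂ r₁ r₂) (h1 : U₁ ⊆ W₁) (h2 : U₂ ⊆ W₂) (hr : r₁ ∈ U₁) :
    wd G (W₁ ∪ W₂) (U₁ ∪ U₂) r₂ = wd H W₂ U₂ r₂ := by
  have := g.symm.wU h2 h1 hr
  rwa [Set.union_comm W₂, Set.union_comm U₂] at this

lemma Gr.wC' (g : Gr H G W₁ W₂ r₁ r₂) (h1 : U₁ ⊆ W₁) (h2 : U₂ ⊆ W₂) (hr : r₁ ∉ U₁) :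
    wd G (W₁ ∪ W₂) (U₁ ∪ U₂) r₂ = insert r₁ (wd H W₂ U₂ r₂) := by
  have := g.symm.wC h2 h1 hr
  rwa [Set.union_comm W₂, Set.union_comm U₂] at this

lemma ne_of_mem {A B : Set V} {x : V} (h : x ∈ A) (h' : x ∉ B) : A ≠ B := by
  rintro rfl; exact h' h

lemma mem_wd_self {W U : Set V} {r : V} (h : r ∈ W) (h' : r ∉ U) : r ∈ wd G W U r :=
  ⟨h, h', Or.inl rfl⟩

variable {n s n' s' h f h' f' : Bool}

lemma Gr.uu (g : Gr H G W₁ W₂ r₁ r₂) (a : SU H W₁ U₁ r₁ n s) (b : SU H W₂ U₂ r₂ true true)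
    (hns : s = true → n = true) : SU G (W₁ ∪ W₂) (U₁ ∪ U₂) r₁ n s := by
  have e1 := g.wU a.base.sub b.base.sub b.mem
  have e2 := g.wU' a.base.sub b.base.sub a.mem
  have b2 := b.hn rfl
  refine ⟨g.base a.base b.base ?_ ?_ ?_, Or.inl a.mem, ?_, ?_⟩
  · rw [e2]; exact b2
  · intro v hv hr; rw [e2]; exact g.ne_of wd_sub wd_sub (Or.inr b2)
  · intro v hv hr; rw [e2]; exact b.hs rfl v hv hr
  · rw [e1]; exact a.hn
  · intro hs
    have n1 := a.hn (hns hs)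
    rw [e1]
    refine g.cmp a.base b.base _ ?_ (a.hs hs) ?_
    · rw [e2]; exact (g.ne_of wd_sub wd_sub (Or.inl n1)).symm
    · intro v hv hr; exact (g.ne_of wd_sub wd_sub (Or.inl n1)).symm

lemma Gr.uc (g : Gr H G W₁ W₂ r₁ r₂) (a : SU H W₁ U₁ r₁ n s) (b : SC H W₂ U₂ r₂ h f true) :
    SU G (W₁ ∪ W₂) (U₁ ∪ U₂) r₁ true (n || (h && f)) := by
  have e1 := g.wC a.base.sub b.base.sub b.mem
  have e2 := g.wU' a.base.sub b.base.sub a.mem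
  have b2 : r₂ ∈ wd H W₂ U₂ r₂ := mem_wd_self g.m2 b.mem
  refine ⟨g.base a.base b.base ?_ ?_ ?_, Or.inl a.mem, ?_, ?_⟩
  · rw [e2]; exact ⟨_, b2⟩
  · intro v hv hr; rw [e2]; exact g.ne_of wd_sub wd_sub (Or.inr ⟨_, b2⟩)
  · intro v hv hr; rw [e2]; exact b.hs rfl v hv hr
  · rw [e1]; exact fun _ => ⟨r₂, Set.mem_insert _ _⟩
  · intro hs
    rw [e1]
    have hn : ∀ v ∈ W₂, wd H W₂ U₂ v ≠ {r₂} → wd H W₂ U₂ v ≠ insert r₂ (wd H W₁ U₁ r₁) := by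
      intro v hv hv' he
      rcases Set.eq_empty_or_nonempty (wd H W₁ U₁ r₁) with h0 | ⟨x, hx⟩
      · rw [h0] at he; exact hv' (by simpa using he)
      · have : x ∈ wd H W₂ U₂ v := by rw [he]; exact Or.inr hx
        exact g.disj x hx.1 this.1
    have hn' : n = true → ∀ v ∈ W₂, wd H W₂ U₂ v ≠ insert r₂ (wd H W₁ U₁ r₁) := by
      intro hn v hv he
      obtain ⟨x, hx⟩ := a.hn hn
      have : x ∈ wd H W₂ U₂ v := by rw [he]; exact Or.inr hx
      exact g.disj x hx.1 this.1
    refine g.cmp a.base b.base _ ?_ ?_ ?_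
    · rw [e2]
      cases n with
      | true => exact hn' rfl r₂ g.m2
      | false =>
        simp only [Bool.false_or, Bool.and_eq_true] at hs
        exact hn r₂ g.m2 (b.hh hs.1)
    · intro v hv hr
      exact (ne_of_mem (Set.mem_insert _ _) (fun h => g.disj _ (wd_sub h) g.m2)).symm
    · intro v hv hr
      cases n with
      | true => exact hn' rfl v hv
      | false =>
        simp only [Bool.false_or, Bool.and_eq_true] at hs
        exact hn v hv (b.hf hs.2 v hv hr)

lemma Gr.cu (g : Gr H G W₁ W₂ r₁ r₂) (a : SC H W₁ U₁ r₁ h f s) (b : SU H W₂ U₂ r₂ true s') :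
    SC G (W₁ ∪ W₂) (U₁ ∪ U₂) r₁ h f s := by
  have e1 := g.wU a.base.sub b.base.sub b.mem
  have e2 := g.wC' a.base.sub b.base.sub a.mem
  have a1 : r₁ ∈ wd H W₁ U₁ r₁ := mem_wd_self g.m1 a.mem
  obtain ⟨x, hx⟩ := b.hn rfl
  have hx1 : x ∉ W₁ := fun h => g.disj x h hx.1
  have hxr : x ∈ insert r₁ (wd H W₂ U₂ r₂) := Or.inr hx
  have hr1 : r₁ ∉ W₂ := g.disj _ g.m1
  refine ⟨g.base a.base b.base ?_ ?_ ?_, ?_, ?_, ?_, ?_⟩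
  · rw [e2]; exact ⟨_, hxr⟩
  · intro v hv hr; rw [e2]; exact (ne_of_mem hxr (fun h => hx1 h.1)).symm
  · intro v hv hr; rw [e2]
    exact (ne_of_mem (Set.mem_insert _ _) (fun h => hr1 h.1)).symm
  · rintro (h | h)
    · exact a.mem h
    · exact hr1 (b.base.sub h)
  · rw [e1]; exact a.hh
  · intro hf
    refine g.cmp a.base b.base _ ?_ (a.hf hf) ?_
    · rw [e2]
      refine ne_of_mem hxr ?_
      rintro rfl; exact hx1 g.m1
    · intro v hv hr
      exact (ne_of_mem (Set.mem_singleton _) (fun h => hr1 h.1)).symm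
  · intro hs
    rw [e1]
    refine g.cmp a.base b.base _ ?_ (a.hs hs) ?_
    · rw [e2]; exact ne_of_mem hxr (fun h => hx1 h.1)
    · intro v hv hr
      exact (ne_of_mem a1 (fun h => hr1 (wd_sub h))).symm

lemma Gr.cp (g : Gr H G W₁ W₂ r₁ r₂) (a : SC H W₁ U₁ r₁ h true s) (b : SU H W₂ U₂ r₂ n s') :
    SC G (W₁ ∪ W₂) (U₁ ∪ U₂) r₁ h false (h && s) := by
  have e1 := g.wU a.base.sub b.base.sub b.mem
  have e2 := g.wC' a.base.sub b.base.sub a.mem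
  have a1 : r₁ ∈ wd H W₁ U₁ r₁ := mem_wd_self g.m1 a.mem
  have hr1 : r₁ ∉ W₂ := g.disj _ g.m1
  have key : ∀ v ∈ W₁, wd H W₁ U₁ v ≠ {r₁} → wd H W₁ U₁ v ≠ insert r₁ (wd H W₂ U₂ r₂) := by
    intro v hv hv' he
    rcases Set.eq_empty_or_nonempty (wd H W₂ U₂ r₂) with h0 | ⟨x, hx⟩
    · rw [h0] at he; exact hv' (by simpa using he)
    · have : x ∈ wd H W₁ U₁ v := by rw [he]; exact Or.inr hx
      exact g.disj x this.1 hx.1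
  refine ⟨g.base a.base b.base ?_ ?_ ?_, ?_, ?_, ?_, ?_⟩
  · rw [e2]; exact ⟨_, Set.mem_insert _ _⟩
  · intro v hv hr; rw [e2]; exact key v hv (a.hf rfl v hv hr)
  · intro v hv hr; rw [e2]
    exact (ne_of_mem (Set.mem_insert _ _) (fun h => hr1 h.1)).symm
  · rintro (h | h)
    · exact a.mem h
    · exact hr1 (b.base.sub h)
  · rw [e1]; exact a.hh
  · intro hf; cases hf
  · intro hs
    simp only [Bool.and_eq_true] at hs
    rw [e1]
    refine g.cmp a.base b.base _ ?_ (a.hs hs.2) ?_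
    · rw [e2]; exact (key r₁ g.m1 (a.hh hs.1)).symm
    · intro v hv hr
      exact (ne_of_mem a1 (fun h => hr1 (wd_sub h))).symm

lemma Gr.cc (g : Gr H G W₁ W₂ r₁ r₂) (a : SC H W₁ U₁ r₁ h f s) (b : SC H W₂ U₂ r₂ h' f' s') :
    SC G (W₁ ∪ W₂) (U₁ ∪ U₂) r₁ true f (h || h') := by
  have e1 := g.wC a.base.sub b.base.sub b.mem
  have e2 := g.wC' a.base.sub b.base.sub a.mem
  have a1 : r₁ ∈ wd H W₁ U₁ r₁ := mem_wd_self g.m1 a.mem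
  have b1 : r₂ ∈ wd H W₂ U₂ r₂ := mem_wd_self g.m2 b.mem
  have hr1 : r₁ ∉ W₂ := g.disj _ g.m1
  have hr2 : r₂ ∉ W₁ := fun h => g.disj _ h g.m2
  have hne : r₂ ≠ r₁ := by rintro rfl; exact hr1 g.m2
  refine ⟨g.base a.base b.base ?_ ?_ ?_, ?_, ?_, ?_, ?_⟩
  · rw [e2]; exact ⟨_, Set.mem_insert _ _⟩
  · intro v hv hr; rw [e2]
    exact (ne_of_mem (Set.mem_insert_of_mem _ b1) (fun h => hr2 (wd_sub h))).symm
  · intro v hv hr; rw [e2]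
    exact (ne_of_mem (Set.mem_insert _ _) (fun h => hr1 h.1)).symm
  · rintro (h | h)
    · exact a.mem h
    · exact hr1 (b.base.sub h)
  · intro _; rw [e1]; exact ne_of_mem (Set.mem_insert _ _) hne
  · intro hf
    refine g.cmp a.base b.base _ ?_ (a.hf hf) ?_
    · rw [e2]; exact ne_of_mem (Or.inr b1) hne
    · intro v hv hr
      exact (ne_of_mem (Set.mem_singleton _) (fun h => hr1 h.1)).symm
  · intro hs
    rw [e1]
    refine g.cmp a.base b.base _ ?_ ?_ ?_
    · rw [e2]
      intro he
      simp only [Bool.or_eq_true] at hs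
      rcases hs with hs | hs
      · apply a.hh hs
        ext x
        simp only [Set.mem_singleton_iff]
        constructor
        · intro hx
          have : x ∈ insert r₁ (wd H W₂ U₂ r₂) := by rw [he]; exact Or.inr hx
          rcases this with h | h
          · exact h
          · exact absurd h.1 (g.disj x hx.1)
        · rintro rfl; exact a1
      · apply b.hh hs
        ext x
        simp only [Set.mem_singleton_iff]
        constructor
        · intro hx
          have : x ∈ insert r₂ (wd H W₁ U₁ r₁) := by rw [← he]; exact Or.inr hx
          rcases this with h | h
          · exact h
          · exact absurd hx.1 (g.disj x h.1)
        · rintro rfl; exact b1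
    · intro v hv hr
      exact (ne_of_mem (Set.mem_insert _ _) (fun h => hr2 h.1)).symm
    · intro v hv hr
      exact (ne_of_mem (Set.mem_insert_of_mem _ a1) (fun h => hr1 (wd_sub h))).symm

/-! ### Values of the states -/

section Values

variable [Finite V] {D a b : ℤ} {W : Set V} {r : V}

/-- Some `U` realises the given root state (root outside the code) with value at least `a`. -/
def HasU (D : ℤ) (G : SimpleGraph V) (W : Set V) (r : V) (n s : Bool) (a : ℤ) : Prop :=
  ∃ U, SU G W U r n s ∧ a ≤ D * (U.ncard : ℤ) - (W.ncard : ℤ)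

/-- Some `U` realises the given root state (root inside the code) with value at least `a`. -/
def HasC (D : ℤ) (G : SimpleGraph V) (W : Set V) (r : V) (h f s : Bool) (a : ℤ) : Prop :=
  ∃ U, SC G W U r h f s ∧ a ≤ D * (U.ncard : ℤ) - (W.ncard : ℤ)

lemma HasU.wk {a' : ℤ} (x : HasU D G W r n s a) (hk : (n' ≤ n ∧ s' ≤ s) ∧ a' ≤ a) : HasU D G W r n' s' a' := by
  obtain ⟨U, h, hU⟩ := x
  obtain ⟨⟨hn, hs⟩, ha⟩ := hk
  refine ⟨U, ⟨h.base, h.mem, fun e => h.hn ?_, fun e => h.hs ?_⟩, ha.trans hU⟩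
  · subst e; exact top_le_iff.1 hn
  · subst e; exact top_le_iff.1 hs

lemma HasC.wk {a' : ℤ} (x : HasC D G W r h f s a) (hk : (h' ≤ h ∧ f' ≤ f ∧ s' ≤ s) ∧ a' ≤ a) : HasC D G W r h' f' s' a' := by
  obtain ⟨U, k, hU⟩ := x
  obtain ⟨⟨hh, hf, hs⟩, ha⟩ := hk
  refine ⟨U, ⟨k.base, k.mem, fun e => k.hh ?_, fun e => k.hf ?_, fun e => k.hs ?_⟩, ha.trans hU⟩
  · subst e; exact top_le_iff.1 hh
  · subst e; exact top_le_iff.1 hf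
  · subst e; exact top_le_iff.1 hs

lemma Gr.val (g : Gr H G W₁ W₂ r₁ r₂) (h1 : U₁ ⊆ W₁) (h2 : U₂ ⊆ W₂)
    (ha : a ≤ D * (U₁.ncard : ℤ) - (W₁.ncard : ℤ)) (hb : b ≤ D * (U₂.ncard : ℤ) - (W₂.ncard : ℤ)) :
    a + b ≤ D * ((U₁ ∪ U₂).ncard : ℤ) - ((W₁ ∪ W₂).ncard : ℤ) := by
  have dW : Disjoint W₁ W₂ := Set.disjoint_left.2 g.disj
  have dU : Disjoint U₁ U₂ := dW.mono h1 h2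
  rw [Set.ncard_union_eq dW (Set.toFinite _) (Set.toFinite _),
    Set.ncard_union_eq dU (Set.toFinite _) (Set.toFinite _)]
  push_cast
  linarith [mul_add D (U₁.ncard : ℤ) (U₂.ncard : ℤ)]

lemma HasU.uu (x : HasU D H W₁ r₁ n s a) (g : Gr H G W₁ W₂ r₁ r₂)
    (y : HasU D H W₂ r₂ true true b) (hns : s = true → n = true) :
    HasU D G (W₁ ∪ W₂) r₁ n s (a + b) := by
  obtain ⟨U, h, hU⟩ := x
  obtain ⟨U', h', hV⟩ := y
  exact ⟨_, g.uu h h' hns, g.val h.base.sub h'.base.sub hU hV⟩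

lemma HasU.uc (x : HasU D H W₁ r₁ n s a) (g : Gr H G W₁ W₂ r₁ r₂)
    (y : HasC D H W₂ r₂ h f true b) :
    HasU D G (W₁ ∪ W₂) r₁ true (n || (h && f)) (a + b) := by
  obtain ⟨U, h, hU⟩ := x
  obtain ⟨U', h', hV⟩ := y
  exact ⟨_, g.uc h h', g.val h.base.sub h'.base.sub hU hV⟩

lemma HasC.cu (x : HasC D H W₁ r₁ h f s a) (g : Gr H G W₁ W₂ r₁ r₂)
    (y : HasU D H W₂ r₂ true s' b) :
    HasC D G (W₁ ∪ W₂) r₁ h f s (a + b) := by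
  obtain ⟨U, h, hU⟩ := x
  obtain ⟨U', h', hV⟩ := y
  exact ⟨_, g.cu h h', g.val h.base.sub h'.base.sub hU hV⟩

lemma HasC.cp (x : HasC D H W₁ r₁ h true s a) (g : Gr H G W₁ W₂ r₁ r₂)
    (y : HasU D H W₂ r₂ n s' b) :
    HasC D G (W₁ ∪ W₂) r₁ h false (h && s) (a + b) := by
  obtain ⟨U, h, hU⟩ := x
  obtain ⟨U', h', hV⟩ := y
  exact ⟨_, g.cp h h', g.val h.base.sub h'.base.sub hU hV⟩

lemma HasC.cc (x : HasC D H W₁ r₁ h f s a) (g : Gr H G W₁ W₂ r₁ r₂)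
    (y : HasC D H W₂ r₂ h' f' s' b) :
    HasC D G (W₁ ∪ W₂) r₁ true f (h || h') (a + b) := by
  obtain ⟨U, h, hU⟩ := x
  obtain ⟨U', h', hV⟩ := y
  exact ⟨_, g.cc h h', g.val h.base.sub h'.base.sub hU hV⟩

/-! ### The types of rooted subtrees -/

/-- The type of a single vertex. -/
def T0 (D : ℤ) (G : SimpleGraph V) (W : Set V) (r : V) : Prop :=
  HasU D G W r false false (D - 1) ∧ HasC D G W r false true true (-1)

def T1 (D : ℤ) (G : SimpleGraph V) (W : Set V) (r : V) : Prop :=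
  HasU D G W r true false (D - 2) ∧ HasC D G W r false false false (D - 2) ∧
    HasC D G W r true true false (-2)

def T2 (D : ℤ) (G : SimpleGraph V) (W : Set V) (r : V) (d : ℤ) : Prop :=
  HasU D G W r true true (D - 1 - d) ∧ HasC D G W r true false false (D - 1 - d) ∧
    HasC D G W r true true true (-1 - d)

def T3 (D : ℤ) (G : SimpleGraph V) (W : Set V) (r : V) : Prop :=
  HasC D G W r false true true (D - 3) ∧ HasC D G W r true true false (D - 3) ∧
    HasC D G W r true true true (-3)

def T4 (D : ℤ) (G : SimpleGraph V) (W : Set V) (r : V) : Prop :=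
  HasU D G W r false false (D - 1) ∧ HasU D G W r true true (-1) ∧
    HasC D G W r true true true (-1)

def T5 (D : ℤ) (G : SimpleGraph V) (W : Set V) (r : V) (d : ℤ) : Prop :=
  HasC D G W r true false false (2 * D - 2 - d) ∧ HasC D G W r true true true (D - 2 - d)

/-- Every rooted subtree, whose root has degree `d ≥ 1` in it, has one of five types. -/
def Ty (D : ℤ) (G : SimpleGraph V) (W : Set V) (r : V) (d : ℤ) : Prop :=
  T1 D G W r ∨ T2 D G W r d ∨ T3 D G W r ∨ T4 D G W r ∨ T5 D G W r d

lemma Ty.i1 {d : ℤ} (h : T1 D G W r) : Ty D G W r d := Or.inl h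
lemma Ty.i2 {d : ℤ} (h : T2 D G W r d) : Ty D G W r d := Or.inr (Or.inl h)
lemma Ty.i3 {d : ℤ} (h : T3 D G W r) : Ty D G W r d := Or.inr (Or.inr (Or.inl h))
lemma Ty.i4 {d : ℤ} (h : T4 D G W r) : Ty D G W r d := Or.inr (Or.inr (Or.inr (Or.inl h)))
lemma Ty.i5 {d : ℤ} (h : T5 D G W r d) : Ty D G W r d := Or.inr (Or.inr (Or.inr (Or.inr h)))

lemma T0.leaf (g : Gr H G W₁ W₂ r₁ r₂) (hD : 3 ≤ D)
    (x : T0 D H W₁ r₁) (y : T0 D H W₂ r₂) : Ty D G (W₁ ∪ W₂) r₁ 1 :=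
  .i1 ⟨(x.1.uc g y.2).wk ⟨by decide, by omega⟩,
    (x.2.cp g y.1).wk ⟨by decide, by omega⟩,
    (x.2.cc g y.2).wk ⟨by decide, by omega⟩⟩

lemma T0.graft {e : ℤ} (g : Gr H G W₁ W₂ r₁ r₂) (hD : 3 ≤ D)
    (he : 1 ≤ e) (he2 : e + 1 ≤ D)
    (x : T0 D H W₁ r₁) (y : Ty D H W₂ r₂ e) : Ty D G (W₁ ∪ W₂) r₁ 1 := by
  rcases y with y | y | y | y | y
  · exact .i3 ⟨(x.2.cu g y.1).wk ⟨by decide, by omega⟩,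
      (x.2.cc g y.2.1).wk ⟨by decide, by omega⟩,
      (x.2.cc g y.2.2).wk ⟨by decide, by omega⟩⟩
  · exact .i4 ⟨(x.1.uu g y.1 (by decide)).wk ⟨by decide, by omega⟩,
      (x.1.uc g y.2.2).wk ⟨by decide, by omega⟩,
      (x.2.cc g y.2.1).wk ⟨by decide, by omega⟩⟩
  · exact .i4 ⟨(x.1.uc g y.1).wk ⟨by decide, by omega⟩,
      (x.1.uc g y.2.2).wk ⟨by decide, by omega⟩,
      (x.2.cc g y.2.1).wk ⟨by decide, by omega⟩⟩
  · exact .i1 ⟨(x.1.uc g y.2.2).wk ⟨by decide, by omega⟩,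
      (x.2.cp g y.1).wk ⟨by decide, by omega⟩,
      (x.2.cc g y.2.2).wk ⟨by decide, by omega⟩⟩
  · exact .i1 ⟨(x.1.uc g y.2).wk ⟨by decide, by omega⟩,
      (x.2.cc g y.1).wk ⟨by decide, by omega⟩,
      (x.2.cc g y.1).wk ⟨by decide, by omega⟩⟩

lemma T1.leaf {d : ℤ} (g : Gr H G W₁ W₂ r₁ r₂) (hD : 3 ≤ D) (hd : 1 ≤ d) (hd2 : d + 2 ≤ D)
    (x : T1 D H W₁ r₁) (y : T0 D H W₂ r₂) : Ty D G (W₁ ∪ W₂) r₁ (d + 1) :=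
  .i2 ⟨(x.1.uc g y.2).wk ⟨by decide, by omega⟩,
    (x.2.1.cc g y.2).wk ⟨by decide, by omega⟩,
    (x.2.2.cc g y.2).wk ⟨by decide, by omega⟩⟩

lemma T1.graft {d e : ℤ} (g : Gr H G W₁ W₂ r₁ r₂) (hD : 3 ≤ D) (hd : 1 ≤ d) (hd2 : d + 2 ≤ D)
    (he : 1 ≤ e) (he2 : e + 1 ≤ D)
    (x : T1 D H W₁ r₁) (y : Ty D H W₂ r₂ e) : Ty D G (W₁ ∪ W₂) r₁ (d + 1) := by
  rcases y with y | y | y | y | y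
  · exact .i5 ⟨(x.2.1.cc g y.2.1).wk ⟨by decide, by omega⟩,
      (x.2.2.cc g y.2.1).wk ⟨by decide, by omega⟩⟩
  · exact .i1 ⟨(x.1.uu g y.1 (by decide)).wk ⟨by decide, by omega⟩,
      (x.2.1.cu g y.1).wk ⟨by decide, by omega⟩,
      (x.2.2.cu g y.1).wk ⟨by decide, by omega⟩⟩
  · exact .i1 ⟨(x.1.uc g y.1).wk ⟨by decide, by omega⟩,
      (x.2.1.cc g y.1).wk ⟨by decide, by omega⟩,
      (x.2.2.cc g y.1).wk ⟨by decide, by omega⟩⟩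
  · exact .i2 ⟨(x.1.uc g y.2.2).wk ⟨by decide, by omega⟩,
      (x.2.1.cc g y.2.2).wk ⟨by decide, by omega⟩,
      (x.2.2.cc g y.2.2).wk ⟨by decide, by omega⟩⟩
  · exact .i2 ⟨(x.1.uc g y.2).wk ⟨by decide, by omega⟩,
      (x.2.1.cc g y.1).wk ⟨by decide, by omega⟩,
      (x.2.2.cc g y.1).wk ⟨by decide, by omega⟩⟩

lemma T2.leaf {d : ℤ} (g : Gr H G W₁ W₂ r₁ r₂) (hD : 3 ≤ D) (hd : 1 ≤ d) (hd2 : d + 2 ≤ D)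
    (x : T2 D H W₁ r₁ d) (y : T0 D H W₂ r₂) : Ty D G (W₁ ∪ W₂) r₁ (d + 1) :=
  .i2 ⟨(x.1.uc g y.2).wk ⟨by decide, by omega⟩,
    (x.2.1.cc g y.2).wk ⟨by decide, by omega⟩,
    (x.2.2.cc g y.2).wk ⟨by decide, by omega⟩⟩

lemma T2.graft {d e : ℤ} (g : Gr H G W₁ W₂ r₁ r₂) (hD : 3 ≤ D) (hd : 1 ≤ d) (hd2 : d + 2 ≤ D)
    (he : 1 ≤ e) (he2 : e + 1 ≤ D)
    (x : T2 D H W₁ r₁ d) (y : Ty D H W₂ r₂ e) : Ty D G (W₁ ∪ W₂) r₁ (d + 1) := by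
  rcases y with y | y | y | y | y
  · exact .i5 ⟨(x.2.1.cu g y.1).wk ⟨by decide, by omega⟩,
      (x.2.2.cu g y.1).wk ⟨by decide, by omega⟩⟩
  · exact .i2 ⟨(x.1.uu g y.1 (by decide)).wk ⟨by decide, by omega⟩,
      (x.2.1.cu g y.1).wk ⟨by decide, by omega⟩,
      (x.2.2.cu g y.1).wk ⟨by decide, by omega⟩⟩
  · exact .i1 ⟨(x.1.uc g y.1).wk ⟨by decide, by omega⟩,
      (x.2.1.cc g y.1).wk ⟨by decide, by omega⟩,
      (x.2.2.cc g y.1).wk ⟨by decide, by omega⟩⟩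
  · exact .i2 ⟨(x.1.uu g y.2.1 (by decide)).wk ⟨by decide, by omega⟩,
      (x.2.1.cu g y.2.1).wk ⟨by decide, by omega⟩,
      (x.2.2.cu g y.2.1).wk ⟨by decide, by omega⟩⟩
  · exact .i2 ⟨(x.1.uc g y.2).wk ⟨by decide, by omega⟩,
      (x.2.1.cc g y.1).wk ⟨by decide, by omega⟩,
      (x.2.2.cc g y.1).wk ⟨by decide, by omega⟩⟩

lemma T3.leaf {d : ℤ} (g : Gr H G W₁ W₂ r₁ r₂) (hD : 3 ≤ D) (hd : 1 ≤ d) (hd2 : d + 2 ≤ D)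
    (x : T3 D H W₁ r₁) (y : T0 D H W₂ r₂) : Ty D G (W₁ ∪ W₂) r₁ (d + 1) :=
  .i5 ⟨(x.2.1.cp g y.1).wk ⟨by decide, by omega⟩,
    (x.2.1.cc g y.2).wk ⟨by decide, by omega⟩⟩

lemma T3.graft {d e : ℤ} (g : Gr H G W₁ W₂ r₁ r₂) (hD : 3 ≤ D) (hd : 1 ≤ d) (hd2 : d + 2 ≤ D)
    (he : 1 ≤ e) (he2 : e + 1 ≤ D)
    (x : T3 D H W₁ r₁) (y : Ty D H W₂ r₂ e) : Ty D G (W₁ ∪ W₂) r₁ (d + 1) := by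
  rcases y with y | y | y | y | y
  · exact .i3 ⟨(x.1.cu g y.1).wk ⟨by decide, by omega⟩,
      (x.1.cc g y.2.1).wk ⟨by decide, by omega⟩,
      (x.1.cc g y.2.2).wk ⟨by decide, by omega⟩⟩
  · exact .i3 ⟨(x.1.cu g y.1).wk ⟨by decide, by omega⟩,
      (x.1.cc g y.2.1).wk ⟨by decide, by omega⟩,
      (x.1.cc g y.2.1).wk ⟨by decide, by omega⟩⟩
  · exact .i3 ⟨(x.1.cc g y.2.1).wk ⟨by decide, by omega⟩,
      (x.1.cc g y.1).wk ⟨by decide, by omega⟩,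
      (x.1.cc g y.2.1).wk ⟨by decide, by omega⟩⟩
  · exact .i5 ⟨(x.2.1.cp g y.1).wk ⟨by decide, by omega⟩,
      (x.1.cc g y.2.2).wk ⟨by decide, by omega⟩⟩
  · exact .i3 ⟨(x.1.cc g y.1).wk ⟨by decide, by omega⟩,
      (x.1.cc g y.1).wk ⟨by decide, by omega⟩,
      (x.1.cc g y.1).wk ⟨by decide, by omega⟩⟩

lemma T4.leaf {d : ℤ} (g : Gr H G W₁ W₂ r₁ r₂) (hD : 3 ≤ D) (hd : 1 ≤ d) (hd2 : d + 2 ≤ D)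
    (x : T4 D H W₁ r₁) (y : T0 D H W₂ r₂) : Ty D G (W₁ ∪ W₂) r₁ (d + 1) :=
  .i1 ⟨(x.1.uc g y.2).wk ⟨by decide, by omega⟩,
    (x.2.2.cp g y.1).wk ⟨by decide, by omega⟩,
    (x.2.2.cc g y.2).wk ⟨by decide, by omega⟩⟩

lemma T4.graft {d e : ℤ} (g : Gr H G W₁ W₂ r₁ r₂) (hD : 3 ≤ D) (hd : 1 ≤ d) (hd2 : d + 2 ≤ D)
    (he : 1 ≤ e) (he2 : e + 1 ≤ D)
    (x : T4 D H W₁ r₁) (y : Ty D H W₂ r₂ e) : Ty D G (W₁ ∪ W₂) r₁ (d + 1) := by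
  rcases y with y | y | y | y | y
  · exact .i3 ⟨(x.2.2.cu g y.1).wk ⟨by decide, by omega⟩,
      (x.2.2.cu g y.1).wk ⟨by decide, by omega⟩,
      (x.2.2.cu g y.1).wk ⟨by decide, by omega⟩⟩
  · exact .i4 ⟨(x.1.uu g y.1 (by decide)).wk ⟨by decide, by omega⟩,
      (x.1.uc g y.2.2).wk ⟨by decide, by omega⟩,
      (x.2.2.cu g y.1).wk ⟨by decide, by omega⟩⟩
  · exact .i4 ⟨(x.1.uc g y.1).wk ⟨by decide, by omega⟩,
      (x.1.uc g y.2.2).wk ⟨by decide, by omega⟩,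
      (x.2.2.cc g y.1).wk ⟨by decide, by omega⟩⟩
  · exact .i1 ⟨(x.1.uc g y.2.2).wk ⟨by decide, by omega⟩,
      (x.2.2.cp g y.1).wk ⟨by decide, by omega⟩,
      (x.2.2.cu g y.2.1).wk ⟨by decide, by omega⟩⟩
  · exact .i1 ⟨(x.1.uc g y.2).wk ⟨by decide, by omega⟩,
      (x.2.2.cc g y.1).wk ⟨by decide, by omega⟩,
      (x.2.2.cc g y.1).wk ⟨by decide, by omega⟩⟩

lemma T5.leaf {d : ℤ} (g : Gr H G W₁ W₂ r₁ r₂) (hD : 3 ≤ D) (hd : 1 ≤ d) (hd2 : d + 2 ≤ D)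
    (x : T5 D H W₁ r₁ d) (y : T0 D H W₂ r₂) : Ty D G (W₁ ∪ W₂) r₁ (d + 1) :=
  .i5 ⟨(x.1.cc g y.2).wk ⟨by decide, by omega⟩,
    (x.2.cc g y.2).wk ⟨by decide, by omega⟩⟩

lemma T5.graft {d e : ℤ} (g : Gr H G W₁ W₂ r₁ r₂) (hD : 3 ≤ D) (hd : 1 ≤ d) (hd2 : d + 2 ≤ D)
    (he : 1 ≤ e) (he2 : e + 1 ≤ D)
    (x : T5 D H W₁ r₁ d) (y : Ty D H W₂ r₂ e) : Ty D G (W₁ ∪ W₂) r₁ (d + 1) := by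
  rcases y with y | y | y | y | y
  · exact .i3 ⟨(x.2.cu g y.1).wk ⟨by decide, by omega⟩,
      (x.2.cu g y.1).wk ⟨by decide, by omega⟩,
      (x.2.cu g y.1).wk ⟨by decide, by omega⟩⟩
  · exact .i5 ⟨(x.1.cu g y.1).wk ⟨by decide, by omega⟩,
      (x.2.cu g y.1).wk ⟨by decide, by omega⟩⟩
  · exact .i3 ⟨(x.2.cc g y.1).wk ⟨by decide, by omega⟩,
      (x.2.cc g y.1).wk ⟨by decide, by omega⟩,
      (x.2.cc g y.1).wk ⟨by decide, by omega⟩⟩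
  · exact .i5 ⟨(x.1.cu g y.2.1).wk ⟨by decide, by omega⟩,
      (x.2.cu g y.2.1).wk ⟨by decide, by omega⟩⟩
  · exact .i3 ⟨(x.2.cc g y.1).wk ⟨by decide, by omega⟩,
      (x.2.cc g y.1).wk ⟨by decide, by omega⟩,
      (x.2.cc g y.1).wk ⟨by decide, by omega⟩⟩

lemma Ty.leaf {d : ℤ} (g : Gr H G W₁ W₂ r₁ r₂) (hD : 3 ≤ D) (hd : 1 ≤ d) (hd2 : d + 2 ≤ D)
    (x : Ty D H W₁ r₁ d) (y : T0 D H W₂ r₂) : Ty D G (W₁ ∪ W₂) r₁ (d + 1) := by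
  rcases x with x | x | x | x | x
  · exact x.leaf g hD hd hd2 y
  · exact x.leaf g hD hd hd2 y
  · exact x.leaf g hD hd hd2 y
  · exact x.leaf g hD hd hd2 y
  · exact x.leaf g hD hd hd2 y

lemma Ty.graft {d e : ℤ} (g : Gr H G W₁ W₂ r₁ r₂) (hD : 3 ≤ D) (hd : 1 ≤ d) (hd2 : d + 2 ≤ D)
    (he : 1 ≤ e) (he2 : e + 1 ≤ D)
    (x : Ty D H W₁ r₁ d) (y : Ty D H W₂ r₂ e) : Ty D G (W₁ ∪ W₂) r₁ (d + 1) := by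
  rcases x with x | x | x | x | x
  · exact x.graft g hD hd hd2 he he2 y
  · exact x.graft g hD hd hd2 he he2 y
  · exact x.graft g hD hd hd2 he he2 y
  · exact x.graft g hD hd hd2 he he2 y
  · exact x.graft g hD hd hd2 he he2 y
end Values

/-! ### Decomposing an acyclic graph -/

/-- The vertex set of the component of `r`. -/
def comp (H : SimpleGraph V) (r : V) : Set V := {x | H.Reachable r x}

lemma comp_self (H : SimpleGraph V) (r : V) : r ∈ comp H r := SimpleGraph.Reachable.refl r

lemma del_adj (H : SimpleGraph V) (r t x y : V) :
    (H.deleteEdges {s(r, t)}).Adj x y ↔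
      H.Adj x y ∧ ¬ ((x = r ∧ y = t) ∨ (x = t ∧ y = r)) := by
  rw [SimpleGraph.deleteEdges_adj]
  simp

lemma del_graft (hA : H.IsAcyclic) {r t : V} (hrt : H.Adj r t) :
    Gr (H.deleteEdges {s(r, t)}) H (comp (H.deleteEdges {s(r, t)}) r)
      (comp (H.deleteEdges {s(r, t)}) t) r t := by
  have hb : ¬ (H.deleteEdges {s(r, t)}).Reachable r t := by
    have := SimpleGraph.isAcyclic_iff_forall_adj_isBridge.1 hA hrt
    rw [SimpleGraph.isBridge_iff] at this
    exact this
  refine ⟨?_, comp_self _ _, comp_self _ _, ?_, ?_⟩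
  · intro x hx hx'
    exact hb (SimpleGraph.Reachable.trans hx (SimpleGraph.Reachable.symm hx'))
  · intro x y
    rw [del_adj]
    have := hrt.symm
    constructor
    · intro h; tauto
    · rintro (h | ⟨rfl, rfl⟩ | ⟨rfl, rfl⟩)
      · exact h.1
      · exact hrt
      · exact hrt.symm
  · intro x hx y hy hxy
    exact hb ((SimpleGraph.Reachable.trans hx hxy.reachable).trans
      (SimpleGraph.Reachable.symm hy))

lemma del_comp {r t : V} (hrt : H.Adj r t) :
    comp H r = comp (H.deleteEdges {s(r, t)}) r ∪ comp (H.deleteEdges {s(r, t)}) t := by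
  have hle : H.deleteEdges {s(r, t)} ≤ H := SimpleGraph.deleteEdges_le _
  apply Set.Subset.antisymm
  · rintro x ⟨p⟩
    have key : ∀ (u v : V), H.Walk u v → 
        u ∈ comp (H.deleteEdges {s(r, t)}) r ∪ comp (H.deleteEdges {s(r, t)}) t →
        v ∈ comp (H.deleteEdges {s(r, t)}) r ∪ comp (H.deleteEdges {s(r, t)}) t := by
      intro u v p
      induction p with
      | nil => exact id
      | @cons a b c hab q ih =>
        intro ha
        apply ih
        by_cases h : (H.deleteEdges {s(r, t)}).Adj a b
        · rcases ha with ha | ha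
          · exact Or.inl (SimpleGraph.Reachable.trans ha h.reachable)
          · exact Or.inr (SimpleGraph.Reachable.trans ha h.reachable)
        · rw [del_adj] at h
          have : (a = r ∧ b = t) ∨ (a = t ∧ b = r) := by tauto
          rcases this with ⟨_, rfl⟩ | ⟨_, rfl⟩
          · exact Or.inr (comp_self _ _)
          · exact Or.inl (comp_self _ _)
    exact key r x p (Or.inl (comp_self _ _))
  · rintro x (hx | hx)
    · exact SimpleGraph.Reachable.mono hle hx
    · exact hrt.reachable.trans (SimpleGraph.Reachable.mono hle hx)

lemma del_nbr_left {r t : V} (hrt : H.Adj r t) :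
    H.neighborSet r = insert t ((H.deleteEdges {s(r, t)}).neighborSet r) := by
  ext x
  simp only [SimpleGraph.mem_neighborSet, Set.mem_insert_iff, del_adj]
  have := hrt.ne
  constructor
  · intro h; by_cases hx : x = t
    · exact Or.inl hx
    · refine Or.inr ⟨h, ?_⟩
      rintro (h | h)
      · exact hx h.2
      · exact this h.1
  · rintro (rfl | h)
    · exact hrt
    · exact h.1

lemma del_comm (H : SimpleGraph V) (r t : V) :
    H.deleteEdges {s(r, t)} = H.deleteEdges {s(t, r)} := by rw [Sym2.eq_swap]

variable [Finite V]

/-- The degree of a vertex. -/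
noncomputable def dg (H : SimpleGraph V) (v : V) : ℕ := (H.neighborSet v).ncard

lemma del_dg_left {r t : V} (hrt : H.Adj r t) :
    dg H r = dg (H.deleteEdges {s(r, t)}) r + 1 := by
  unfold dg
  rw [del_nbr_left hrt, Set.ncard_insert_of_notMem _ (Set.toFinite _)]
  simp

lemma del_dg_right {r t : V} (hrt : H.Adj r t) :
    dg H t = dg (H.deleteEdges {s(r, t)}) t + 1 := by
  rw [del_comm]; exact del_dg_left hrt.symm

lemma del_dg_le (r t v : V) : dg (H.deleteEdges {s(r, t)}) v ≤ dg H v :=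
  Set.ncard_le_ncard (fun _ hx => SimpleGraph.deleteEdges_le _ hx) (Set.toFinite _)

lemma comp_single {r : V} (h : dg H r = 0) : comp H r = {r} := by
  have h0 : H.neighborSet r = ∅ := (Set.ncard_eq_zero (Set.toFinite _)).1 h
  ext x
  simp only [Set.mem_singleton_iff]
  constructor
  · rintro ⟨p⟩
    cases p with
    | nil => rfl
    | cons hab q => exact absurd (show _ ∈ H.neighborSet r from hab) (by rw [h0]; simp)
  · rintro rfl; exact comp_self _ _

lemma T0_single (D : ℤ) (r : V) : T0 D H {r} r := by
  refine ⟨⟨{r}, ⟨⟨subset_rfl, ?_, ?_⟩, rfl, by simp, by simp⟩, by simp⟩,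
    ⟨∅, ⟨⟨by simp, ?_, ?_⟩, by simp, by simp, ?_, ?_⟩, by simp⟩⟩
  all_goals simp +contextual

/-- Every component with a root of degree less than `D` has a type. -/
theorem main_ty (D : ℕ) (hD : 3 ≤ D) : ∀ (m : ℕ) (H : SimpleGraph V) (r : V),
    (comp H r).ncard ≤ m → H.IsAcyclic → (∀ v, dg H v ≤ D) → 
    (dg H r = 0 → T0 (D : ℤ) H (comp H r) r) ∧
    (1 ≤ dg H r → dg H r + 1 ≤ D → Ty (D : ℤ) H (comp H r) r (dg H r : ℤ)) := by
  intro m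
  induction m with
  | zero =>
    intro H r hm
    have := (Set.ncard_eq_zero (Set.toFinite _)).1 (Nat.le_zero.1 hm)
    exact absurd (comp_self H r) (by rw [this]; simp)
  | succ m ih =>
    intro H r hm hA hdeg
    refine ⟨fun h => by rw [comp_single h]; exact T0_single _ r, fun h1 h2 => ?_⟩
    obtain ⟨t, ht⟩ : (H.neighborSet r).Nonempty := Set.nonempty_of_ncard_ne_zero (by
      have : 1 ≤ (H.neighborSet r).ncard := h1
      omega)
    have hrt : H.Adj r t := ht
    have g := del_graft hA hrt
    have hc := del_comp hrt
    have d1 := del_dg_left hrt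
    have d2 := del_dg_right hrt
    have dle := del_dg_le (H := H) r t
    have hA' : (H.deleteEdges {s(r, t)}).IsAcyclic := hA.anti (SimpleGraph.deleteEdges_le _)
    generalize H.deleteEdges {s(r, t)} = H' at *
    have hdis : Disjoint (comp H' r) (comp H' t) := Set.disjoint_left.2 g.disj
    have hcard : (comp H r).ncard = (comp H' r).ncard + (comp H' t).ncard := by
      rw [hc, Set.ncard_union_eq hdis (Set.toFinite _) (Set.toFinite _)]
    have p1 : 0 < (comp H' r).ncard := (Set.ncard_pos (Set.toFinite _)).2 ⟨r, comp_self _ _⟩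
    have p2 : 0 < (comp H' t).ncard := (Set.ncard_pos (Set.toFinite _)).2 ⟨t, comp_self _ _⟩
    have i1 := ih H' r (by omega) hA' (fun v => (dle v).trans (hdeg v))
    have i2 := ih H' t (by omega) hA' (fun v => (dle v).trans (hdeg v))
    have ht := hdeg t
    have hD' : (3 : ℤ) ≤ D := by exact_mod_cast hD
    rw [hc, d1]
    push_cast
    by_cases z1 : dg H' r = 0
    · have x := i1.1 z1
      rw [z1]
      by_cases z2 : dg H' t = 0
      · have y := i2.1 z2
        simpa using T0.leaf g hD' x y
      · have y := i2.2 (by omega) (by omega)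
        simpa using T0.graft g hD' (by omega) (by omega) x y
    · have x := i1.2 (by omega) (by omega)
      by_cases z2 : dg H' t = 0
      · have y := i2.1 z2
        exact Ty.leaf g hD' (by omega) (by omega) x y
      · have y := i2.2 (by omega) (by omega)
        exact Ty.graft g hD' (by omega) (by omega) (by omega) (by omega) x y

lemma T0.fin {D : ℤ} {e : ℤ} {W₁ W₂ : Set V} {r₁ r₂ : V} (g : Gr H G W₁ W₂ r₁ r₂) (hD : 3 ≤ D)
    (he : 1 ≤ e) (he2 : e + 1 ≤ D)
    (x : T0 D H W₁ r₁) (y : Ty D H W₂ r₂ e) :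
    HasU D G (W₁ ∪ W₂) r₁ true true (-1) ∨ HasC D G (W₁ ∪ W₂) r₁ false false true (-1) := by
  rcases y with y | y | y | y | y
  · exact .inr <| (x.2.cu g y.1).wk ⟨by decide, by omega⟩
  · exact .inl <| (x.1.uc g y.2.2).wk ⟨by decide, by omega⟩
  · exact .inl <| (x.1.uc g y.2.2).wk ⟨by decide, by omega⟩
  · exact .inl <| (x.1.uc g y.2.2).wk ⟨by decide, by omega⟩
  · exact .inl <| (x.1.uc g y.2).wk ⟨by decide, by omega⟩

lemma wd_univ (G : SimpleGraph V) (U : Set V) (v : V) :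
    wd G Set.univ U v = closedNbhd G v ∩ Uᶜ := by
  ext x
  simp only [wd, closedNbhd, Set.mem_ofPred_eq, Set.mem_univ, true_and, Set.mem_inter_iff,
    Set.mem_insert_iff, SimpleGraph.mem_neighborSet, Set.mem_compl_iff]
  tauto

lemma code_of_base {U : Set V} {r : V} (b : Base G Set.univ U r)
    (hn : (wd G Set.univ U r).Nonempty)
    (hs : ∀ v ∈ Set.univ, v ≠ r → wd G Set.univ U v ≠ wd G Set.univ U r) : IsIDCode G Uᶜ := by
  constructor
  · intro v
    rw [← wd_univ]
    by_cases h : v = r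
    · rw [h]; exact hn
    · exact b.ne v trivial h
  · intro u w huw
    rw [← wd_univ, ← wd_univ]
    by_cases h : u = r
    · subst h; exact (hs w trivial (Ne.symm huw)).symm
    by_cases h' : w = r
    · subst h'; exact hs u trivial huw
    exact b.sep u trivial w trivial h h' huw

theorem main (D : ℕ) (hD : 3 ≤ D) (hT : G.IsTree) (hdeg : ∀ v, dg G v ≤ D)
    (hex : ∃ v, 3 ≤ dg G v) :
    ∃ U : Set V, IsIDCode G Uᶜ ∧ (-1 : ℤ) ≤ (D : ℤ) * U.ncard - Nat.card V := by
  classical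
  have : Fintype V := Fintype.ofFinite V
  obtain ⟨w, hw⟩ := hex
  have hnt : Nontrivial V := by
    obtain ⟨t, ht⟩ : (G.neighborSet w).Nonempty := Set.nonempty_of_ncard_ne_zero (by
      have : 3 ≤ (G.neighborSet w).ncard := hw
      omega)
    exact ⟨w, t, SimpleGraph.Adj.ne ht⟩
  obtain ⟨r, hr⟩ := hT.exists_vert_degree_one_of_nontrivial
  have hr1 : dg G r = 1 := by
    unfold dg
    rw [Set.ncard_eq_toFinset_card', ← hr, SimpleGraph.degree]
    congr
  have hall : comp G r = Set.univ := Set.eq_univ_of_forall fun x => hT.1.preconnected r x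
  obtain ⟨t, ht⟩ : (G.neighborSet r).Nonempty := Set.nonempty_of_ncard_ne_zero (by
    have : (G.neighborSet r).ncard = 1 := hr1
    omega)
  have hrt : G.Adj r t := ht
  have hA := hT.2
  have g := del_graft hA hrt
  have hc := del_comp hrt
  have d1 := del_dg_left hrt
  have d2 := del_dg_right hrt
  have dle := del_dg_le (H := G) r t
  have hA' : (G.deleteEdges {s(r, t)}).IsAcyclic := hA.anti (SimpleGraph.deleteEdges_le _)
  generalize G.deleteEdges {s(r, t)} = H' at *
  have i1 := (main_ty D hD _ H' r le_rfl hA' (fun v => (dle v).trans (hdeg v))).1 (by omega)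
  have ht1 : dg H' t ≠ 0 := by
    intro h0
    have hw' : w ∈ comp H' r ∪ comp H' t := by rw [← hc, hall]; trivial
    rw [comp_single h0, comp_single (by omega)] at hw'
    rcases hw' with h | h
    · rw [Set.mem_singleton_iff.1 h] at hw; omega
    · rw [Set.mem_singleton_iff.1 h] at hw; omega
  have htD := hdeg t
  have i2 := (main_ty D hD _ H' t le_rfl hA' (fun v => (dle v).trans (hdeg v))).2
    (by omega) (by omega)
  have fin := T0.fin g (by exact_mod_cast hD) (by omega) (by omega) i1 i2
  rw [← hc, hall] at fin
  rcases fin with ⟨U, hU, hv⟩ | ⟨U, hU, hv⟩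
  · exact ⟨U, code_of_base hU.base (hU.hn rfl) (hU.hs rfl), by rwa [Set.ncard_univ] at hv⟩
  · exact ⟨U, code_of_base hU.base ⟨r, mem_wd_self trivial hU.mem⟩ (hU.hs rfl),
      by rwa [Set.ncard_univ] at hv⟩

end IDTree

/-- every tree on `n` vertices with maximum degree `Δ ≥ 3` satisfies
`γ^ID(G) ≤ ((Δ−1)/Δ)·n + 1/Δ`. -/
theorem stmt_0 {V : Type*} [Fintype V] (G : SimpleGraph V) (hT : G.IsTree)
    (Δ : ℕ) (hΔ : 3 ≤ Δ) (hmax : maxDeg G = Δ) :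
    (idNum G : ℝ) ≤ ((Δ : ℝ) - 1) / Δ * (Fintype.card V) + 1 / Δ := by
  have hdeg : ∀ v, IDTree.dg G v ≤ Δ := by
    intro v
    rw [← hmax]
    exact Finset.le_sup (f := fun v => (G.neighborSet v).ncard) (Finset.mem_univ v)
  have hex : ∃ v, 3 ≤ IDTree.dg G v := by
    by_contra hcon
    push Not at hcon
    have : maxDeg G ≤ 2 := Finset.sup_le fun v _ => Nat.le_of_lt_succ (hcon v)
    omega
  obtain ⟨U, hU, hv⟩ := IDTree.main Δ hΔ hT hdeg hex
  have h1 : idNum G ≤ Uᶜ.ncard := Nat.sInf_le ⟨Uᶜ, rfl, hU⟩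
  have h2 : U.ncard + Uᶜ.ncard = Nat.card V := Set.ncard_add_ncard_compl U
  rw [Nat.card_eq_fintype_card] at h2 hv
  have h1' : (idNum G : ℝ) ≤ Uᶜ.ncard := by exact_mod_cast h1
  have h2' : (U.ncard : ℝ) + Uᶜ.ncard = Fintype.card V := by exact_mod_cast h2
  have hv' : (-1 : ℝ) ≤ (Δ : ℝ) * U.ncard - Fintype.card V := by exact_mod_cast hv
  have hpos : (0 : ℝ) < Δ := by
    have : 0 < Δ := by omega
    exact_mod_cast this
  have e : ((Δ : ℝ) - 1) / Δ * (Fintype.card V) + 1 / Δ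
      = (((Δ : ℝ) - 1) * (Fintype.card V) + 1) / Δ := by
    field_simp
  rw [e, le_div_iff₀ hpos]
  have h3 : (idNum G : ℝ) * Δ ≤ Uᶜ.ncard * Δ := mul_le_mul_of_nonneg_right h1' hpos.le
  have h4 : (Uᶜ.ncard : ℝ) = Fintype.card V - U.ncard := by linarith
  rw [h4] at h3
  linarith
end

section
/- Let G be a tree on n ≥ 23 vertices with maximum degree exactly 3. Then γ^ID(G) ≤ (2/3)·n. -/
open SimpleGraph

/-! ### The finite-state certificate

States of a vertex `v` with parent `p` with respect to the code `C`:
* `0`: `v ∉ C`, `p ∈ C`, no child of `v` in `C`;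
* `1`: `v ∉ C`, `p ∈ C`, some child of `v` in `C`;
* `2`: `v ∉ C`, `p ∉ C`;
* `3`: `v ∈ C`, `p ∉ C`;
* `4`: `v ∈ C`, `p ∉ C`, and `p` may be identified by `{v}`;
* `5`: `v ∈ C`, `p ∈ C`, some child of `v` in `C`;
* `6`: `v ∈ C`, `p ∈ C`, no child of `v` in `C`. -/

/-- Allowed pairs of states of the two children; an absent child counts as `1` or `2`. -/
def stTrans : ℕ → List (ℕ × ℕ)
  | 0 => [(2, 2)]
  | 1 => [(3, 2), (2, 3), (3, 3)]
  | 2 => [(3, 3), (4, 2), (2, 4)]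
  | 3 => [(1, 1), (5, 0), (5, 1), (0, 5), (1, 5), (5, 5), (5, 6), (6, 5), (6, 6)]
  | 4 => [(5, 1), (1, 5), (5, 5), (5, 6), (6, 5), (6, 6)]
  | 5 => [(5, 0), (5, 1), (0, 5), (1, 5), (6, 0), (6, 1), (0, 6), (1, 6),
      (5, 5), (5, 6), (6, 5), (6, 6)]
  | 6 => [(0, 1), (1, 0), (1, 1)]
  | _ => []

/-- Profiles (indexed by states) of branches by size: the entry at `s` is an upper bound for
`3 |C| - 2 |S| + 10`; values at least `100` carry no information. -/
def lev : ℕ → List (List ℕ)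
  | 0 => [[1000, 10, 10, 1000, 1000, 1000, 1000]]
  | 1 => [[8, 1000, 1000, 11, 1000, 1000, 11]]
  | 2 => [[1000, 9, 1000, 1000, 1000, 12, 9]]
  | 3 => [[1000, 1000, 1000, 10, 13, 10, 10], [1000, 10, 10, 13, 13, 10, 1000]]
  | 4 => [[1000, 1000, 1000, 11, 11, 8, 8],
      [1000, 8, 11, 11, 11, 11, 1000],
      [8, 11, 11, 11, 11, 11, 11]]
  | 5 => [[1000, 1000, 1000, 9, 9, 9, 9],
      [1000, 9, 9, 9, 12, 9, 1000],
      [1000, 9, 12, 9, 12, 9, 9],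
      [9, 9, 9, 12, 12, 12, 9]]
  | 6 => [[1000, 1000, 1000, 10, 10, 10, 1000], [1000, 10, 10, 10, 13, 10, 10]]
  | 7 => [[1000, 1000, 1000, 8, 8, 8, 1000],
      [1000, 1000, 1000, 11, 11, 8, 8],
      [1000, 8, 11, 11, 11, 11, 1000],
      [8, 11, 11, 11, 11, 11, 11]]
  | 8 => [[1000, 1000, 1000, 9, 9, 9, 1000],
      [1000, 9, 9, 9, 12, 9, 1000],
      [9, 9, 9, 12, 12, 12, 9]]
  | 9 => [[1000, 1000, 1000, 10, 10, 10, 1000], [1000, 10, 10, 10, 13, 10, 10]]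
  | 10 => [[1000, 1000, 1000, 8, 8, 8, 1000],
      [1000, 1000, 1000, 11, 11, 8, 8],
      [1000, 8, 8, 11, 11, 11, 1000],
      [8, 8, 11, 11, 11, 11, 11]]
  | 11 => [[1000, 1000, 1000, 9, 9, 9, 1000],
      [1000, 9, 9, 9, 12, 9, 1000],
      [9, 9, 9, 9, 12, 12, 9]]
  | 12 => [[1000, 1000, 1000, 10, 10, 10, 1000],
      [1000, 10, 10, 10, 13, 10, 7],
      [10, 10, 10, 10, 13, 10, 10]]
  | 13 => [[1000, 1000, 1000, 8, 8, 8, 1000],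
      [1000, 1000, 1000, 8, 11, 8, 8],
      [1000, 8, 8, 11, 11, 11, 1000],
      [8, 8, 11, 11, 11, 11, 11]]
  | 14 => [[1000, 1000, 1000, 9, 9, 9, 1000],
      [1000, 9, 9, 9, 12, 9, 1000],
      [9, 9, 9, 9, 12, 12, 9]]
  | 15 => [[1000, 1000, 1000, 10, 10, 10, 1000],
      [1000, 10, 10, 10, 13, 10, 7],
      [10, 10, 10, 10, 13, 10, 10]]
  | 16 => [[1000, 1000, 1000, 8, 8, 8, 1000],
      [1000, 1000, 1000, 8, 11, 8, 8],
      [1000, 8, 8, 11, 11, 11, 1000],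
      [8, 8, 11, 11, 11, 11, 11]]
  | 17 => [[1000, 1000, 1000, 9, 9, 9, 1000],
      [1000, 9, 9, 9, 12, 9, 1000],
      [9, 9, 9, 9, 12, 12, 9]]
  | 18 => [[1000, 1000, 1000, 10, 10, 10, 1000],
      [1000, 10, 10, 10, 13, 10, 7],
      [7, 7, 10, 10, 13, 10, 10]]
  | 19 => [[1000, 1000, 1000, 8, 8, 8, 1000],
      [1000, 1000, 1000, 8, 11, 8, 8],
      [1000, 8, 8, 11, 11, 11, 1000],
      [8, 8, 11, 11, 11, 11, 11]]
  | 20 => [[1000, 1000, 1000, 9, 9, 9, 1000],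
      [1000, 9, 9, 9, 12, 9, 1000],
      [9, 9, 9, 9, 12, 12, 9]]
  | 21 => [[1000, 1000, 1000, 10, 10, 10, 1000],
      [1000, 10, 10, 10, 13, 10, 7],
      [7, 7, 10, 10, 13, 10, 10]]
  | 22 => [[1000, 1000, 1000, 8, 8, 8, 1000],
      [1000, 1000, 1000, 8, 11, 8, 8],
      [1000, 8, 8, 11, 11, 11, 1000],
      [8, 8, 11, 11, 11, 8, 11],
      [8, 8, 11, 8, 11, 11, 8]]
  | 23 => [[1000, 1000, 1000, 9, 9, 9, 1000],
      [1000, 9, 9, 9, 12, 9, 1000],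
      [6, 9, 9, 9, 12, 12, 9]]
  | 24 => [[1000, 1000, 1000, 10, 10, 10, 1000], [1000, 7, 10, 10, 13, 10, 7]]
  | 25 => [[1000, 1000, 1000, 8, 8, 8, 1000],
      [1000, 1000, 1000, 8, 11, 8, 8],
      [1000, 8, 8, 11, 11, 11, 1000]]
  | _ => []

/-- The level of a size: sizes from `23` on only matter modulo three. -/
def lvl (n : ℕ) : ℕ := if n < 26 then n else 23 + (n - 23) % 3

def val (g : List ℕ) (s : ℕ) : ℕ := g.getD s 1000

def okPair (a b g : List ℕ) : Bool :=
  (List.range 7).all fun s => Nat.ble 100 (val g s) ||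
    (stTrans s).any fun q => Nat.ble (val a q.1) 99 && (Nat.ble (val b q.2) 99 &&
      Nat.ble (val a q.1 + val b q.2 + (if Nat.ble 3 s then 3 else 0)) (val g s + 12))

def checkAll : Bool :=
  (List.range 26).all fun i => (List.range 26).all fun j =>
    (lev i).all fun a => (lev j).all fun b => (lev (lvl (i + j + 1))).any fun g => okPair a b g

theorem checkAll_true : checkAll = true := by decide +kernel

theorem lvl_lt (n : ℕ) : lvl n < 26 := by unfold lvl; split <;> omega

theorem lvl_add (n m : ℕ) : lvl (n + m + 1) = lvl (lvl n + lvl m + 1) := by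
  unfold lvl; split_ifs <;> omega

theorem lev_length : ∀ i < 26, ∀ g ∈ lev i, g.length = 7 := by decide +kernel

theorem lev_step (n m : ℕ) (a b : List ℕ) (ha : a ∈ lev (lvl n)) (hb : b ∈ lev (lvl m)) :
    ∃ g ∈ lev (lvl (n + m + 1)), ∀ s, val g s < 100 → ∃ q ∈ stTrans s,
      val a q.1 < 100 ∧ val b q.2 < 100 ∧
      val a q.1 + val b q.2 + (if 3 ≤ s then 3 else 0) ≤ val g s + 12 := by
  have h := checkAll_true
  simp only [checkAll, List.all_eq_true, List.mem_range, List.any_eq_true] at h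
  obtain ⟨g, hg, h⟩ := h _ (lvl_lt n) _ (lvl_lt m) a ha b hb
  rw [← lvl_add] at hg
  refine ⟨g, hg, fun s hs => ?_⟩
  have h7 : s < 7 := by
    by_contra h7
    have hl := lev_length _ (lvl_lt _) g hg
    have : val g s = 1000 := by
      unfold val
      rw [List.getD_eq_default]; omega
    omega
  simp only [okPair, List.all_eq_true, List.mem_range, Bool.or_eq_true, Nat.ble_eq,
    List.any_eq_true, Bool.and_eq_true] at h
  rcases h s h7 with h | ⟨q, hq, h1, h2, h3⟩
  · omega
  · exact ⟨q, hq, by omega, by omega, h3⟩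

theorem lev_final (n : ℕ) (hn : 23 ≤ n) (g : List ℕ) (hg : g ∈ lev (lvl n)) :
    val g 2 ≤ 10 ∨ val g 3 ≤ 10 := by
  have h : ∀ i ∈ [23, 24, 25], ∀ g ∈ lev i, val g 2 ≤ 10 ∨ val g 3 ≤ 10 := by decide +kernel
  refine h _ ?_ g hg
  have h1 := lvl_lt n
  have h2 : 23 ≤ lvl n := by unfold lvl; split <;> omega
  simp only [List.mem_cons, List.not_mem_nil, or_false]
  omega

/-! ### Rooted trees with at most two children per vertex -/

section Rooted

variable {V : Type*}

/-- `x` is a descendant of `v` with respect to the child relation `Ch`. -/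
def Desc (Ch : V → V → Prop) (v x : V) : Prop := Relation.ReflTransGen Ch v x

/-- State of an optional child. -/
def St (σ : V → ℕ) (o : Option V) (s : ℕ) : Prop :=
  match o with
  | none => s = 1 ∨ s = 2
  | some c => σ c = s

/-- Local consistency of a labelling by states. -/
def Rule (o₁ o₂ : V → Option V) (σ : V → ℕ) (x : V) : Prop :=
  ∃ q ∈ stTrans (σ x), St σ (o₁ x) q.1 ∧ St σ (o₂ x) q.2

theorem St.congr {σ τ : V → ℕ} {o : Option V} {s : ℕ} (h : ∀ c, o = some c → τ c = σ c)
    (hs : St σ o s) : St τ o s := by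
  cases o with
  | none => exact hs
  | some c => simpa [St, h c rfl] using hs

open Classical in
/-- Set of vertices of the branch of an optional vertex. -/
noncomputable def Br [Fintype V] (Ch : V → V → Prop) (o : Option V) : Finset V :=
  Finset.univ.filter fun x => ∃ c, o = some c ∧ Desc Ch c x

theorem mem_Br [Fintype V] {Ch : V → V → Prop} {o : Option V} {x : V} :
    x ∈ Br Ch o ↔ ∃ c, o = some c ∧ Desc Ch c x := by
  simp [Br]

theorem desc_depth {Ch : V → V → Prop} {d : V → ℕ} (hd : ∀ v c, Ch v c → d c = d v + 1)
    {a x : V} (h : Desc Ch a x) : d a ≤ d x := by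
  induction h with
  | refl => exact le_rfl
  | tail _ h ih => have := hd _ _ h; omega

theorem desc_unique {Ch : V → V → Prop} {d : V → ℕ} (hd : ∀ v c, Ch v c → d c = d v + 1)
    (hu : ∀ v w c, Ch v c → Ch w c → v = w) {a b x : V} (ha : Desc Ch a x) (hb : Desc Ch b x)
    (hab : d a = d b) : a = b := by
  induction ha with
  | refl =>
    rcases Relation.ReflTransGen.cases_tail hb with h | ⟨z, h1, h2⟩
    · exact h
    · have := desc_depth hd h1
      have := hd _ _ h2
      omega
  | @tail y x h1 h2 ih =>
    rcases Relation.ReflTransGen.cases_tail hb with h | ⟨z, h3, h4⟩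
    · have := desc_depth hd h1
      have := hd _ _ h2
      subst h
      omega
    · have := hu _ _ _ h2 h4
      subst this
      exact ih h3

theorem dp_exists [Fintype V] (Ch : V → V → Prop) (d : V → ℕ) (o₁ o₂ : V → Option V)
    (hd : ∀ v c, Ch v c → d c = d v + 1)
    (hu : ∀ v w c, Ch v c → Ch w c → v = w)
    (ho : ∀ v c, Ch v c ↔ o₁ v = some c ∨ o₂ v = some c)
    (hne : ∀ v c, o₁ v = some c → o₂ v = some c → False) :
    ∀ n : ℕ, ∀ o : Option V, (Br Ch o).card = n →
      ∃ g ∈ lev (lvl n), ∀ s, val g s < 100 → ∃ σ : V → ℕ, St σ o s ∧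
        (∀ x ∈ Br Ch o, Rule o₁ o₂ σ x) ∧
        3 * ((Br Ch o).filter fun x => 3 ≤ σ x).card + 10 ≤ val g s + 2 * n := by
  classical
  intro n
  induction n using Nat.strong_induction_on with
  | _ n ih =>
  intro o hn
  cases o with
  | none =>
    have hB : Br Ch (none : Option V) = ∅ := by
      ext x; simp [mem_Br]
    rw [hB] at hn
    simp only [Finset.card_empty] at hn
    subst hn
    refine ⟨[1000, 10, 10, 1000, 1000, 1000, 1000], by simp [lvl, lev], fun s hs => ?_⟩
    have hs' : s = 1 ∨ s = 2 := by
      rcases s with _ | _ | _ | _ | _ | _ | _ | s <;> simp [val] at hs ⊢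
    refine ⟨fun _ => 0, hs', by simp [hB], ?_⟩
    rcases hs' with rfl | rfl <;> simp [val]
  | some v =>
    have hv1 : ∀ x, x ∈ Br Ch (o₁ v) → ∃ c, o₁ v = some c ∧ Ch v c ∧ Desc Ch c x := by
      intro x hx
      obtain ⟨c, h1, h2⟩ := mem_Br.1 hx
      exact ⟨c, h1, (ho v c).2 (Or.inl h1), h2⟩
    have hv2 : ∀ x, x ∈ Br Ch (o₂ v) → ∃ c, o₂ v = some c ∧ Ch v c ∧ Desc Ch c x := by
      intro x hx
      obtain ⟨c, h1, h2⟩ := mem_Br.1 hx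
      exact ⟨c, h1, (ho v c).2 (Or.inr h1), h2⟩
    have hB : Br Ch (some v) = insert v (Br Ch (o₁ v) ∪ Br Ch (o₂ v)) := by
      ext x
      simp only [Finset.mem_insert, Finset.mem_union]
      constructor
      · intro hx
        obtain ⟨c, h1, h2⟩ := mem_Br.1 hx
        obtain rfl : v = c := by simpa using h1
        rcases Relation.ReflTransGen.cases_head h2 with h | ⟨c, h3, h4⟩
        · exact Or.inl h.symm
        · rcases (ho v c).1 h3 with h | h
          · exact Or.inr (Or.inl (mem_Br.2 ⟨c, h, h4⟩))
          · exact Or.inr (Or.inr (mem_Br.2 ⟨c, h, h4⟩))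
      · rintro (rfl | hx | hx)
        · exact mem_Br.2 ⟨x, rfl, Relation.ReflTransGen.refl⟩
        · obtain ⟨c, _, h2, h3⟩ := hv1 x hx
          exact mem_Br.2 ⟨v, rfl, Relation.ReflTransGen.head h2 h3⟩
        · obtain ⟨c, _, h2, h3⟩ := hv2 x hx
          exact mem_Br.2 ⟨v, rfl, Relation.ReflTransGen.head h2 h3⟩
    have hn1 : v ∉ Br Ch (o₁ v) := by
      intro hx
      obtain ⟨c, _, h2, h3⟩ := hv1 v hx
      have := desc_depth hd h3
      have := hd _ _ h2
      omega
    have hn2 : v ∉ Br Ch (o₂ v) := by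
      intro hx
      obtain ⟨c, _, h2, h3⟩ := hv2 v hx
      have := desc_depth hd h3
      have := hd _ _ h2
      omega
    have hdis : Disjoint (Br Ch (o₁ v)) (Br Ch (o₂ v)) := by
      rw [Finset.disjoint_left]
      intro x hx hy
      obtain ⟨c, h1, h2, h3⟩ := hv1 x hx
      obtain ⟨c', h1', h2', h3'⟩ := hv2 x hy
      have := hd _ _ h2
      have := hd _ _ h2'
      obtain rfl := desc_unique hd hu h3 h3' (by omega)
      exact hne v c h1 h1'
    have hnU : v ∉ Br Ch (o₁ v) ∪ Br Ch (o₂ v) := by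
      simp [hn1, hn2]
    have hcard : n = (Br Ch (o₁ v)).card + (Br Ch (o₂ v)).card + 1 := by
      rw [← hn, hB, Finset.card_insert_of_notMem hnU, Finset.card_union_of_disjoint hdis]
    obtain ⟨a, ha, iha⟩ := ih _ (by omega) (o₁ v) rfl
    obtain ⟨b, hb, ihb⟩ := ih _ (by omega) (o₂ v) rfl
    obtain ⟨g, hg, hstep⟩ := lev_step _ _ a b ha hb
    refine ⟨g, by rwa [hcard], fun s hs => ?_⟩
    obtain ⟨q, hq, hqa, hqb, hle⟩ := hstep s hs
    obtain ⟨σ₁, s1, r1, c1⟩ := iha _ hqa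
    obtain ⟨σ₂, s2, r2, c2⟩ := ihb _ hqb
    set σ : V → ℕ := fun x => if x = v then s else if x ∈ Br Ch (o₁ v) then σ₁ x else σ₂ x
      with hσ
    have e0 : σ v = s := by simp [hσ]
    have e1 : ∀ x ∈ Br Ch (o₁ v), σ x = σ₁ x := by
      intro x hx
      have : x ≠ v := by rintro rfl; exact hn1 hx
      simp [hσ, this, hx]
    have e2 : ∀ x ∈ Br Ch (o₂ v), σ x = σ₂ x := by
      intro x hx
      have h1 : x ≠ v := by rintro rfl; exact hn2 hx
      have h2 : x ∉ Br Ch (o₁ v) := fun h => Finset.disjoint_left.1 hdis h hx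
      simp [hσ, h1, h2]
    have hroot : ∀ o : Option V, ∀ c, o = some c → c ∈ Br Ch o := fun o c h =>
      mem_Br.2 ⟨c, h, Relation.ReflTransGen.refl⟩
    have hclosed : ∀ o : Option V, ∀ x c, x ∈ Br Ch o → Ch x c → c ∈ Br Ch o := by
      intro o x c hx hc
      obtain ⟨y, h1, h2⟩ := mem_Br.1 hx
      exact mem_Br.2 ⟨y, h1, Relation.ReflTransGen.tail h2 hc⟩
    have hrule : ∀ o : Option V, ∀ τ : V → ℕ, (∀ x ∈ Br Ch o, σ x = τ x) →
        (∀ x ∈ Br Ch o, Rule o₁ o₂ τ x) → ∀ x ∈ Br Ch o, Rule o₁ o₂ σ x := by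
      intro o τ he hr x hx
      obtain ⟨q, h1, h2, h3⟩ := hr x hx
      refine ⟨q, by rwa [he x hx], h2.congr ?_, h3.congr ?_⟩
      · intro c hc
        exact he c (hclosed o x c hx ((ho x c).2 (Or.inl hc)))
      · intro c hc
        exact he c (hclosed o x c hx ((ho x c).2 (Or.inr hc)))
    refine ⟨σ, e0, ?_, ?_⟩
    · intro x hx
      rw [hB, Finset.mem_insert, Finset.mem_union] at hx
      rcases hx with rfl | hx | hx
      · refine ⟨q, by rwa [e0], s1.congr ?_, s2.congr ?_⟩
        · intro c hc; exact e1 c (hroot _ c hc)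
        · intro c hc; exact e2 c (hroot _ c hc)
      · exact hrule _ σ₁ e1 r1 x hx
      · exact hrule _ σ₂ e2 r2 x hx
    · have hf1 : ((Br Ch (o₁ v)).filter fun x => 3 ≤ σ x)
          = (Br Ch (o₁ v)).filter fun x => 3 ≤ σ₁ x :=
        Finset.filter_congr fun x hx => by rw [e1 x hx]
      have hf2 : ((Br Ch (o₂ v)).filter fun x => 3 ≤ σ x)
          = (Br Ch (o₂ v)).filter fun x => 3 ≤ σ₂ x :=
        Finset.filter_congr fun x hx => by rw [e2 x hx]
      have hfU : ((Br Ch (o₁ v) ∪ Br Ch (o₂ v)).filter fun x => 3 ≤ σ x).card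
          ≤ ((Br Ch (o₁ v)).filter fun x => 3 ≤ σ₁ x).card
            + ((Br Ch (o₂ v)).filter fun x => 3 ≤ σ₂ x).card := by
        rw [Finset.filter_union, hf1, hf2]
        exact Finset.card_union_le _ _
      rw [hB, Finset.filter_insert, e0]
      by_cases h3 : 3 ≤ s
      · have := Finset.card_insert_le v
          ((Br Ch (o₁ v) ∪ Br Ch (o₂ v)).filter fun x => 3 ≤ σ x)
        simp only [h3, if_true] at hle ⊢
        omega
      · simp only [h3, if_false] at hle ⊢
        omega

end Rooted

/-! ### From a consistent labelling to an identifying code -/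

section Code

variable {V : Type*}

/-- The facts about the children of a vertex that the identifying-code proof uses. -/
theorem rule_facts (Ch : V → V → Prop) (o₁ o₂ : V → Option V)
    (ho : ∀ v c, Ch v c ↔ o₁ v = some c ∨ o₂ v = some c)
    (hne : ∀ v c, o₁ v = some c → o₂ v = some c → False)
    (σ : V → ℕ) (x : V) (h : Rule o₁ o₂ σ x) :
    σ x < 7 ∧
    (∀ c, Ch x c → (3 ≤ σ x ↔ (σ c = 0 ∨ σ c = 1 ∨ σ c = 5 ∨ σ c = 6))) ∧
    (σ x = 0 ∨ σ x = 6 → ∀ c, Ch x c → σ c < 3) ∧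
    (σ x = 1 ∨ σ x = 4 ∨ σ x = 5 → ∃ c, Ch x c ∧ 3 ≤ σ c) ∧
    (σ x = 2 → (∃ c c', c ≠ c' ∧ Ch x c ∧ Ch x c' ∧ 3 ≤ σ c ∧ 3 ≤ σ c') ∨
      ∃ c, Ch x c ∧ σ c = 4) ∧
    (σ x = 4 → ∀ c, Ch x c → σ c ≠ 0) ∧
    (3 ≤ σ x → ∀ c c', Ch x c → Ch x c' → σ c = 0 → σ c' = 0 → c = c') ∧
    (σ x = 3 → ∀ c, Ch x c → σ c = 0 → ∃ c', Ch x c' ∧ 3 ≤ σ c') ∧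
    (∀ c, Ch x c → σ c = 6 → σ x = 5 ∨ ∃ c', c' ≠ c ∧ Ch x c' ∧ 3 ≤ σ c') := by
  obtain ⟨⟨a, b⟩, hq, h1, h2⟩ := h
  have hne' := hne x
  have ho' := ho x
  generalize σ x = s at hq ⊢
  generalize o₁ x = p₁ at *
  generalize o₂ x = p₂ at *
  have hs : s < 7 := by
    by_contra hs
    rcases s with _ | _ | _ | _ | _ | _ | _ | s <;> simp [stTrans] at hq hs
  refine ⟨hs, ?_⟩
  simp only [ho']
  clear ho ho' hne
  rcases p₁ with _ | c₁ <;> rcases p₂ with _ | c₂ <;> simp only [St] at h1 h2 <;>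
    interval_cases s <;> simp [stTrans] at hq <;> grind (splits := 30)

theorem code_of_labelling (G : SimpleGraph V) (Ch : V → V → Prop) (d : V → ℕ) (r : V)
    (hadj : ∀ v w, G.Adj v w ↔ Ch v w ∨ Ch w v)
    (hd : ∀ v c, Ch v c → d c = d v + 1)
    (hu : ∀ v w c, Ch v c → Ch w c → v = w)
    (hp : ∀ v, v ≠ r → ∃ p, Ch p v)
    (σ : V → ℕ) (hr : σ r = 2 ∨ σ r = 3)
    (h7 : ∀ x, σ x < 7)
    (hpc : ∀ x c, Ch x c → (3 ≤ σ x ↔ (σ c = 0 ∨ σ c = 1 ∨ σ c = 5 ∨ σ c = 6)))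
    (h145 : ∀ x, σ x = 1 ∨ σ x = 4 ∨ σ x = 5 → ∃ c, Ch x c ∧ 3 ≤ σ c)
    (h2 : ∀ x, σ x = 2 → (∃ c c', c ≠ c' ∧ Ch x c ∧ Ch x c' ∧ 3 ≤ σ c ∧ 3 ≤ σ c') ∨
      ∃ c, Ch x c ∧ σ c = 4)
    (h4 : ∀ x, σ x = 4 → ∀ c, Ch x c → σ c ≠ 0)
    (hpriv : ∀ x, 3 ≤ σ x → ∀ c c', Ch x c → Ch x c' → σ c = 0 → σ c' = 0 → c = c')
    (h3 : ∀ x, σ x = 3 → ∀ c, Ch x c → σ c = 0 → ∃ c', Ch x c' ∧ 3 ≤ σ c')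
    (h6 : ∀ x c, Ch x c → σ c = 6 → σ x = 5 ∨ ∃ c', c' ≠ c ∧ Ch x c' ∧ 3 ≤ σ c') :
    IsIDCode G {x | 3 ≤ σ x} := by
  have hpar : ∀ x, (σ x = 0 ∨ σ x = 1 ∨ σ x = 5 ∨ σ x = 6) → ∃ p, Ch p x ∧ 3 ≤ σ p := by
    intro x hx
    obtain ⟨p, hp⟩ := hp x (by rintro rfl; omega)
    exact ⟨p, hp, (hpc p x hp).2 hx⟩
  have hmem : ∀ x z, z ∈ closedNbhd G x ∩ {x | 3 ≤ σ x} ↔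
      (z = x ∨ Ch x z ∨ Ch z x) ∧ 3 ≤ σ z := by
    intro x z
    simp [closedNbhd, hadj]
  have hdom : ∀ x, ∃ z, (z = x ∨ Ch x z ∨ Ch z x) ∧ 3 ≤ σ z := by
    intro x
    by_cases hx : 3 ≤ σ x
    · exact ⟨x, Or.inl rfl, hx⟩
    · have : σ x = 0 ∨ σ x = 1 ∨ σ x = 2 := by omega
      rcases this with h | h | h
      · obtain ⟨p, h1, h2⟩ := hpar x (by omega); exact ⟨p, Or.inr (Or.inr h1), h2⟩
      · obtain ⟨p, h1, h2⟩ := hpar x (by omega); exact ⟨p, Or.inr (Or.inr h1), h2⟩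
      · rcases h2 x h with ⟨c, _, _, h1, _, h2, _⟩ | ⟨c, h1, h2⟩
        · exact ⟨c, Or.inr (Or.inl h1), h2⟩
        · exact ⟨c, Or.inr (Or.inl h1), by omega⟩
  -- a code vertex among the children of `x` is not near a vertex that is not deeper than `x`
  have hfar : ∀ x y c, Ch x c → x ≠ y → d y ≤ d x + 1 → y ≠ c →
      ¬ (c = y ∨ Ch y c ∨ Ch c y) := by
    rintro x y c h1 h2 h3 h4 (h | h | h)
    · exact h4 h.symm
    · exact h2 (hu _ _ _ h1 h)
    · have := hd _ _ h1
      have := hd _ _ h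
      omega
  -- siblings
  have sib : ∀ p x y, Ch p x → Ch p y → x ≠ y →
      (∀ z, (z = x ∨ Ch x z ∨ Ch z x) ∧ 3 ≤ σ z ↔ (z = y ∨ Ch y z ∨ Ch z y) ∧ 3 ≤ σ z) →
      False := by
    intro p x y hx hy hxy hz
    have hdx := hd _ _ hx
    have hdy := hd _ _ hy
    have key : ∀ u v, Ch p u → Ch p v → u ≠ v →
        (∀ z, (z = u ∨ Ch u z ∨ Ch z u) ∧ 3 ≤ σ z ↔ (z = v ∨ Ch v z ∨ Ch z v) ∧ 3 ≤ σ z) →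
        3 ≤ σ p ∧ σ u = 0 := by
      intro u v hu' hv huv hz
      have hdu := hd _ _ hu'
      have hdv := hd _ _ hv
      have hchild : ∀ c, Ch u c → ¬ 3 ≤ σ c := by
        intro c hc h
        have := hd _ _ hc
        exact hfar u v c hc huv (by omega) (by rintro rfl; omega)
          ((hz c).1 ⟨Or.inr (Or.inl hc), h⟩).1
      have hcode : ¬ 3 ≤ σ u := by
        intro h
        rcases ((hz u).1 ⟨Or.inl rfl, h⟩).1 with h | h | h
        · exact huv h
        · have := hd _ _ h; omega
        · have := hd _ _ h; omega
      have h1 := h145 u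
      have h2' := h2 u
      have : σ u = 0 := by
        by_contra h0
        have : σ u = 1 ∨ σ u = 2 := by omega
        rcases this with h | h
        · obtain ⟨c, h3, h4⟩ := h1 (by omega)
          exact hchild c h3 h4
        · rcases h2' h with ⟨c, _, _, h3, _, h4, _⟩ | ⟨c, h3, h4⟩
          · exact hchild c h3 h4
          · exact hchild c h3 (by omega)
      exact ⟨(hpc p u hu').2 (Or.inl this), this⟩
    obtain ⟨h1, h2⟩ := key x y hx hy hxy hz
    obtain ⟨-, h3⟩ := key y x hy hx hxy.symm fun z => (hz z).symm
    exact hxy (hpriv p h1 x y hx hy h2 h3)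
  -- grandparent `x` and grandchild `y`
  have gra : ∀ x w y, Ch x w → Ch w y →
      (∀ z, (z = x ∨ Ch x z ∨ Ch z x) ∧ 3 ≤ σ z ↔ (z = y ∨ Ch y z ∨ Ch z y) ∧ 3 ≤ σ z) →
      False := by
    intro x w y hxw hwy hz
    have d1 := hd _ _ hxw
    have d2 := hd _ _ hwy
    have hy : ∀ c, Ch y c → ¬ 3 ≤ σ c := by
      intro c hc h
      have := hd _ _ hc
      exact hfar y x c hc (by rintro rfl; omega) (by omega) (by rintro rfl; omega)
        ((hz c).2 ⟨Or.inr (Or.inl hc), h⟩).1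
    have hy' : ¬ 3 ≤ σ y := by
      intro h
      rcases ((hz y).2 ⟨Or.inl rfl, h⟩).1 with h | h | h
      · subst h; omega
      · have := hd _ _ h; omega
      · have := hd _ _ h; omega
    have hx' : ∀ p, Ch p x → ¬ 3 ≤ σ p := by
      intro p hp h
      have := hd _ _ hp
      rcases ((hz p).1 ⟨Or.inr (Or.inr hp), h⟩).1 with h | h | h
      · subst h; omega
      · have := hd _ _ h; omega
      · have := hd _ _ h; omega
    have hx'' : ¬ 3 ≤ σ x := by
      intro h
      rcases ((hz x).1 ⟨Or.inl rfl, h⟩).1 with h | h | h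
      · subst h; omega
      · have := hd _ _ h; omega
      · have := hd _ _ h; omega
    have hxc : ∀ c, Ch x c → 3 ≤ σ c → c = w := by
      intro c hc h
      have := hd _ _ hc
      rcases ((hz c).1 ⟨Or.inr (Or.inl hc), h⟩).1 with h | h | h
      · subst h; omega
      · have := hd _ _ h; omega
      · exact hu _ _ _ h hwy
    have hx2 : σ x = 2 := by
      by_contra h2
      obtain ⟨p, h3, h4⟩ := hpar x (by omega)
      exact hx' p h3 h4
    have hw4 : σ w = 4 := by
      rcases h2 x hx2 with ⟨c, c', h1, h3, h4, h5, h6⟩ | ⟨c, h1, h3⟩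
      · exact absurd ((hxc c h3 h5).trans (hxc c' h4 h6).symm) h1
      · have := hxc c h1 (by omega)
        subst this; exact h3
    have hy0 : σ y = 0 := by
      by_contra h0
      have : σ y = 1 := by
        have := (hpc w y hwy).1 (by omega)
        omega
      obtain ⟨c, h3, h4⟩ := h145 y (by omega)
      exact hy c h3 h4
    exact h4 w hw4 y hwy hy0
  -- parent `x` and child `y`
  have chi : ∀ x y, Ch x y →
      (∀ z, (z = x ∨ Ch x z ∨ Ch z x) ∧ 3 ≤ σ z ↔ (z = y ∨ Ch y z ∨ Ch z y) ∧ 3 ≤ σ z) →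
      False := by
    intro x y hxy hz
    have d1 := hd _ _ hxy
    have hy : ∀ c, Ch y c → ¬ 3 ≤ σ c := by
      intro c hc h
      have := hd _ _ hc
      exact hfar y x c hc (by rintro rfl; omega) (by omega) (by rintro rfl; omega)
        ((hz c).2 ⟨Or.inr (Or.inl hc), h⟩).1
    have hx' : ∀ p, Ch p x → ¬ 3 ≤ σ p := by
      intro p hp h
      have := hd _ _ hp
      rcases ((hz p).1 ⟨Or.inr (Or.inr hp), h⟩).1 with h | h | h
      · subst h; omega
      · have := hd _ _ h; omega
      · have := hu _ _ _ h hxy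
        subst this; omega
    have hxc : ∀ c, Ch x c → 3 ≤ σ c → c = y := by
      intro c hc h
      have := hd _ _ hc
      rcases ((hz c).1 ⟨Or.inr (Or.inl hc), h⟩).1 with h | h | h
      · exact h
      · have := hd _ _ h; omega
      · have := hd _ _ h; omega
    have hxs : σ x = 2 ∨ σ x = 3 ∨ σ x = 4 := by
      by_contra h2
      have := h7 x
      obtain ⟨p, h3, h4⟩ := hpar x (by omega)
      exact hx' p h3 h4
    have hys : ¬ (σ y = 1 ∨ σ y = 4 ∨ σ y = 5) := by
      intro h
      obtain ⟨c, h3, h4⟩ := h145 y h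
      exact hy c h3 h4
    have hp1 := hpc x y hxy
    rcases hxs with hx | hx
    · rcases h2 x hx with ⟨c, c', h1, h3, h4, h5, h6⟩ | ⟨c, h1, h3⟩
      · exact h1 ((hxc c h3 h5).trans (hxc c' h4 h6).symm)
      · have := hxc c h1 (by omega)
        subst this; omega
    · have hy06 : σ y = 0 ∨ σ y = 6 := by
        have := hp1.1 (by omega)
        omega
      rcases hy06 with h | h
      · rcases hx with hx | hx
        · obtain ⟨c, h1, h2⟩ := h3 x hx y hxy h
          have := hxc c h1 h2
          subst this; omega
        · exact h4 x hx y hxy h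
      · rcases h6 x y hxy h with h1 | ⟨c, h1, h2, h3⟩
        · omega
        · exact h1 (hxc c h2 h3)
  refine ⟨fun x => ?_, fun x y hxy heq => ?_⟩
  · obtain ⟨z, hz⟩ := hdom x
    exact ⟨z, (hmem x z).2 hz⟩
  · have hz : ∀ z, (z = x ∨ Ch x z ∨ Ch z x) ∧ 3 ≤ σ z ↔
        (z = y ∨ Ch y z ∨ Ch z y) ∧ 3 ≤ σ z := by
      intro z
      rw [← hmem, ← hmem, heq]
    obtain ⟨z, h1⟩ := hdom x
    rcases h1.1 with rfl | h | h <;> rcases ((hz z).1 h1).1 with rfl | h' | h'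
    · exact hxy rfl
    · exact chi _ _ h' fun z => (hz z).symm
    · exact chi _ _ h' hz
    · exact chi _ _ h hz
    · exact hxy (hu _ _ _ h h')
    · exact gra _ _ _ h h' hz
    · exact chi _ _ h fun z => (hz z).symm
    · exact gra _ _ _ h' h fun z => (hz z).symm
    · exact sib _ _ _ h h' hxy hz

end Code

/-! ### Rooting a tree and the main theorem -/

theorem parent_unique {V : Type*} (G : SimpleGraph V) (hT : G.IsTree) (r v w c : V)
    (hv : G.Adj v c ∧ G.dist r c = G.dist r v + 1)
    (hw : G.Adj w c ∧ G.dist r c = G.dist r w + 1) : v = w := by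
  obtain ⟨p, hp⟩ := hT.connected.exists_walk_length_eq_dist r v
  obtain ⟨q, hq⟩ := hT.connected.exists_walk_length_eq_dist r w
  have hp' : (p.concat hv.1).IsPath := by
    apply Walk.isPath_of_length_eq_dist
    rw [Walk.length_concat, hp, hv.2]
  have hq' : (q.concat hw.1).IsPath := by
    apply Walk.isPath_of_length_eq_dist
    rw [Walk.length_concat, hq, hw.2]
  have h := congrArg Subtype.val (hT.isAcyclic.path_unique ⟨_, hp'⟩ ⟨_, hq'⟩)
  have h2 := congrArg Walk.penultimate h
  simpa using h2

theorem parent_exists {V : Type*} (G : SimpleGraph V) (hT : G.IsTree) (r v : V) (hv : v ≠ r) :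
    ∃ p, G.Adj p v ∧ G.dist r v = G.dist r p + 1 := by
  obtain ⟨p, hp⟩ := hT.connected.exists_walk_length_eq_dist v r
  cases p with
  | nil => exact absurd rfl hv
  | @cons _ y _ h q =>
    refine ⟨y, h.symm, ?_⟩
    have h1 := G.dist_le q
    rw [Walk.length_cons] at hp
    rw [G.dist_comm (u := v)] at hp
    rw [G.dist_comm] at h1
    rcases hT.dist_eq_dist_add_one_of_adj r h with h2 | h2 <;> omega

theorem two_options {V : Type*} [Finite V] (K : Set V) (hK : K.ncard ≤ 2) :
    ∃ q : Option V × Option V, (∀ c, c ∈ K ↔ q.1 = some c ∨ q.2 = some c) ∧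
      ∀ c, q.1 = some c → q.2 = some c → False := by
  have h : K.ncard = 0 ∨ K.ncard = 1 ∨ K.ncard = 2 := by omega
  rcases h with h | h | h
  · rw [Set.ncard_eq_zero] at h
    exact ⟨(none, none), by simp [h], by simp⟩
  · obtain ⟨a, rfl⟩ := Set.ncard_eq_one.1 h
    exact ⟨(some a, none), by simp [eq_comm], by simp⟩
  · obtain ⟨a, b, hab, rfl⟩ := Set.ncard_eq_two.1 h
    refine ⟨(some a, some b), by simp [eq_comm], ?_⟩
    rintro c h1 h2
    simp only [Option.some.injEq] at h1 h2
    exact hab (h1.trans h2.symm)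

/-- every tree on `n ≥ 23` vertices with maximum degree exactly `3`
satisfies `γ^ID(G) ≤ (2/3)·n`. -/
theorem stmt_2 {V : Type*} [Fintype V] (G : SimpleGraph V) (hT : G.IsTree)
    (hn : 23 ≤ Fintype.card V) (hmax : maxDeg G = 3) :
    (idNum G : ℝ) ≤ 2 / 3 * (Fintype.card V) := by
  classical
  have hnt : Nontrivial V := Fintype.one_lt_card_iff_nontrivial.1 (by omega)
  obtain ⟨r, hr⟩ := hT.exists_vert_degree_one_of_nontrivial
  have hr1 : (G.neighborSet r).ncard = 1 := by
    rw [Set.ncard_eq_toFinset_card', ← hr]; rfl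
  have hdeg : ∀ v, (G.neighborSet v).ncard ≤ 3 := by
    intro v
    rw [← hmax]
    exact Finset.le_sup (f := fun v => (G.neighborSet v).ncard) (Finset.mem_univ v)
  set Ch : V → V → Prop := fun v c => G.Adj v c ∧ G.dist r c = G.dist r v + 1 with hCh
  have hd : ∀ v c, Ch v c → G.dist r c = G.dist r v + 1 := fun v c h => h.2
  have hu : ∀ v w c, Ch v c → Ch w c → v = w := fun v w c => parent_unique G hT r v w c
  have hp : ∀ v, v ≠ r → ∃ p, Ch p v := fun v => parent_exists G hT r v
  have hadj : ∀ v w, G.Adj v w ↔ Ch v w ∨ Ch w v := by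
    intro v w
    constructor
    · intro h
      rcases hT.dist_eq_dist_add_one_of_adj r h with h2 | h2
      · exact Or.inr ⟨h.symm, h2⟩
      · exact Or.inl ⟨h, h2⟩
    · rintro (h | h)
      · exact h.1
      · exact h.1.symm
  have hK : ∀ v, {c | Ch v c}.ncard ≤ 2 := by
    intro v
    by_cases hv : v = r
    · subst hv
      have : {c | Ch v c} ⊆ G.neighborSet v := fun c h => h.1
      have := Set.ncard_le_ncard this
      omega
    · obtain ⟨p, hp⟩ := hp v hv
      have hnot : p ∉ {c | Ch v c} := by
        intro h
        have h1 := hd _ _ h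
        have h2 := hd _ _ hp
        omega
      have hsub : insert p {c | Ch v c} ⊆ G.neighborSet v := by
        intro c hc
        rcases hc with rfl | hc
        · exact hp.1.symm
        · exact hc.1
      have h1 := Set.ncard_le_ncard hsub
      rw [Set.ncard_insert_of_notMem hnot] at h1
      have := hdeg v
      omega
  choose o ho hne using fun v => two_options {c | Ch v c} (hK v)
  have hBr : Br Ch (some r) = Finset.univ := by
    ext x
    simp only [Finset.mem_univ, iff_true]
    refine mem_Br.2 ⟨r, rfl, ?_⟩
    obtain ⟨n, hn⟩ : ∃ n, G.dist r x = n := ⟨_, rfl⟩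
    induction n generalizing x with
    | zero =>
      by_cases hx : x = r
      · subst hx; exact Relation.ReflTransGen.refl
      · obtain ⟨p, hp⟩ := hp x hx
        have := hd _ _ hp
        omega
    | succ n ih =>
      by_cases hx : x = r
      · subst hx; exact Relation.ReflTransGen.refl
      · obtain ⟨p, hp⟩ := hp x hx
        have := hd _ _ hp
        exact Relation.ReflTransGen.tail (ih p (by omega)) hp
  obtain ⟨g, hg, hstate⟩ := dp_exists Ch (G.dist r) (fun v => (o v).1) (fun v => (o v).2)
    hd hu ho hne _ (some r) rfl
  rw [hBr, Finset.card_univ] at hg hstate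
  obtain ⟨s, hs, hgs⟩ : ∃ s, (s = 2 ∨ s = 3) ∧ val g s ≤ 10 := by
    rcases lev_final _ hn g hg with h | h
    · exact ⟨2, Or.inl rfl, h⟩
    · exact ⟨3, Or.inr rfl, h⟩
  obtain ⟨σ, hσr, hrule, hcard⟩ := hstate s (by omega)
  have hσr' : σ r = s := hσr
  have facts := fun x => rule_facts Ch (fun v => (o v).1) (fun v => (o v).2) ho hne σ x
    (hrule x (Finset.mem_univ x))
  have hcode : IsIDCode G {x | 3 ≤ σ x} :=
    code_of_labelling G Ch (G.dist r) r hadj hd hu hp σ (by rw [hσr']; exact hs)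
      (fun x => (facts x).1) (fun x => (facts x).2.1)
      (fun x => (facts x).2.2.2.1) (fun x => (facts x).2.2.2.2.1)
      (fun x => (facts x).2.2.2.2.2.1) (fun x => (facts x).2.2.2.2.2.2.1)
      (fun x => (facts x).2.2.2.2.2.2.2.1) (fun x => (facts x).2.2.2.2.2.2.2.2)
  have hle : idNum G ≤ ({x | 3 ≤ σ x} : Set V).ncard := Nat.sInf_le ⟨_, rfl, hcode⟩
  have hnc : ({x | 3 ≤ σ x} : Set V).ncard = (Finset.univ.filter fun x => 3 ≤ σ x).card := by
    rw [← Set.ncard_coe_finset]; simp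
  have h3 : 3 * idNum G ≤ 2 * Fintype.card V := by omega
  have h4 : (3 : ℝ) * (idNum G : ℝ) ≤ 2 * (Fintype.card V : ℝ) := by exact_mod_cast h3
  linarith
end

section
/- Let G' be an identifiable graph on a finite vertex set V, let v ∈ V, and let Δ ≥ 3 be an integer. Let G be the graph on vertex set V ⊔ {u, l_1, …, l_{Δ−1}} (where u, l_1, …, l_{Δ−1} are Δ new vertices) whose edges are: all edges of G', the edge between v and u, and the edges between u and each l_i (1 ≤ i ≤ Δ−1). Then G is identifiable and γ^ID(G) ≤ γ^ID(G') + Δ − 1. -/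
open SimpleGraph

theorem mem_cn_inl {V : Type*} (G' : SimpleGraph V) (v : V) (k : ℕ) (x y : V) :
    Sum.inl y ∈ closedNbhd (appendStar G' v k) (Sum.inl x) ↔ y ∈ closedNbhd G' x := by
  simp only [closedNbhd, appendStar, Set.mem_insert_iff, SimpleGraph.mem_neighborSet,
    SimpleGraph.fromRel_adj]
  have h1 := G'.adj_comm x y
  have h2 : G'.Adj x y → x ≠ y := fun h => h.ne
  simp
  grind

theorem leaf_mem_inl {V : Type*} (G' : SimpleGraph V) (v : V) (k : ℕ) (x : V) (i : Fin k) :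
    Sum.inr (some i) ∉ closedNbhd (appendStar G' v k) (Sum.inl x) := by
  simp [closedNbhd, appendStar]

theorem leaf_mem_u {V : Type*} (G' : SimpleGraph V) (v : V) (k : ℕ) (i : Fin k) :
    Sum.inr (some i) ∈ closedNbhd (appendStar G' v k) (Sum.inr none) := by
  simp [closedNbhd, appendStar]

theorem leaf_mem_leaf {V : Type*} (G' : SimpleGraph V) (v : V) (k : ℕ) (i j : Fin k) :
    Sum.inr (some i) ∈ closedNbhd (appendStar G' v k) (Sum.inr (some j)) ↔ i = j := by
  simp [closedNbhd, appendStar]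

theorem append_code {V : Type*} (G' : SimpleGraph V) (v : V) (k : ℕ) (hk : 2 ≤ k)
    (C : Set V) (hC : IsIDCode G' C) :
    IsIDCode (appendStar G' v k)
      (Set.image Sum.inl C ∪ Set.range (fun i : Fin k => (Sum.inr (some i) : V ⊕ Option (Fin k)))) := by
  obtain ⟨hd, hs⟩ := hC
  constructor
  · rintro (x | _ | i)
    · obtain ⟨y, hy, hyC⟩ := hd x
      exact ⟨Sum.inl y, (mem_cn_inl ..).2 hy, Or.inl ⟨y, hyC, rfl⟩⟩
    · exact ⟨Sum.inr (some ⟨0, by omega⟩), leaf_mem_u .., Or.inr ⟨_, rfl⟩⟩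
    · exact ⟨Sum.inr (some i), (leaf_mem_leaf ..).2 rfl, Or.inr ⟨_, rfl⟩⟩
  · intro a b hab h
    have hleaf : ∀ i : Fin k, Sum.inr (some i) ∈ closedNbhd (appendStar G' v k) a ↔
        Sum.inr (some i) ∈ closedNbhd (appendStar G' v k) b := by
      intro i
      have := Set.ext_iff.1 h (Sum.inr (some i))
      simpa using this
    have h01 : (⟨0, by omega⟩ : Fin k) ≠ ⟨1, by omega⟩ := by simp
    have ne : ∀ j : Fin k, ∃ i : Fin k, i ≠ j := fun j => by
      by_cases hj : j = ⟨0, by omega⟩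
      · exact ⟨⟨1, by omega⟩, by rw [hj]; exact h01.symm⟩
      · exact ⟨_, Ne.symm hj⟩
    rcases a with x | _ | i <;> rcases b with y | _ | j
    · refine hs x y (by simpa using hab) ?_
      ext z
      have := Set.ext_iff.1 h (Sum.inl z)
      simpa [mem_cn_inl] using this
    · exact leaf_mem_inl _ _ _ _ _ ((hleaf ⟨0, by omega⟩).2 (leaf_mem_u ..))
    · exact leaf_mem_inl _ _ _ _ _ ((hleaf j).2 ((leaf_mem_leaf ..).2 rfl))
    · exact leaf_mem_inl _ _ _ _ _ ((hleaf ⟨0, by omega⟩).1 (leaf_mem_u ..))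
    · exact hab rfl
    · obtain ⟨i, hi⟩ := ne j
      exact hi ((leaf_mem_leaf ..).1 ((hleaf i).1 (leaf_mem_u ..)))
    · exact leaf_mem_inl _ _ _ _ _ ((hleaf i).1 ((leaf_mem_leaf ..).2 rfl))
    · obtain ⟨j, hj⟩ := ne i
      exact hj ((leaf_mem_leaf ..).1 ((hleaf j).2 (leaf_mem_u ..)))
    · have := (leaf_mem_leaf ..).1 ((hleaf i).1 ((leaf_mem_leaf ..).2 rfl))
      exact hab (by rw [this])

/-- appending a `Δ`-star (`Δ ≥ 3`), by one of its leaves, onto a vertex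
`v` of an identifiable graph `G'` yields an identifiable graph `G` with
`γ^ID(G) ≤ γ^ID(G') + Δ − 1`. -/
theorem stmt_5 {V : Type*} [Fintype V] (G' : SimpleGraph V) (hG' : Identifiable G')
    (v : V) (Δ : ℕ) (hΔ : 3 ≤ Δ) :
    Identifiable (appendStar G' v (Δ - 1)) ∧
    idNum (appendStar G' v (Δ - 1)) ≤ idNum G' + (Δ - 1) := by
  have hne : {k | ∃ C : Set V, C.ncard = k ∧ IsIDCode G' C}.Nonempty := by
    refine ⟨_, Set.univ, rfl, fun x => ⟨x, Or.inl rfl, trivial⟩, fun x y hxy => ?_⟩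
    simpa using hG' x y hxy
  obtain ⟨C, hcard, hC⟩ := Nat.sInf_mem hne
  have hcode := append_code G' v (Δ - 1) (by omega) C hC
  refine ⟨fun a b hab h => hcode.2 a b hab (by rw [h]), ?_⟩
  have hle : idNum (appendStar G' v (Δ - 1)) ≤ _ := Nat.sInf_le (Exists.intro _ ⟨rfl, hcode⟩)
  refine hle.trans ((Set.ncard_union_le _ _).trans ?_)
  rw [Set.ncard_image_of_injective _ Sum.inl_injective, hcard, ← idNum]
  refine Nat.add_le_add le_rfl ?_
  rw [← Set.image_univ]
  refine (Set.ncard_image_le (Set.toFinite _)).trans ?_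
  simp [Set.ncard_univ]
end

section
/- Let c be a real number, let G' be an identifiable graph on n₀ vertices with maximum degree Δ₀ ≥ 2, and suppose γ^ID(G') ≤ ((Δ₀−1)/Δ₀)·n₀ + c. Let Δ₁ ≥ 3 be an integer, let v be a vertex of G', and let G be the graph obtained from G' by adding Δ₁ new vertices u, l_1, …, l_{Δ₁−1} together with the edge vu and the edges ul_i (1 ≤ i ≤ Δ₁−1). Then, with M = max(Δ₀, Δ₁), one has γ^ID(G) ≤ ((M−1)/M)·(n₀ + Δ₁) + c. -/
open SimpleGraph

lemma aux_code {V : Type*} (G' : SimpleGraph V) (v : V) (k : ℕ) (hk : 2 ≤ k) (C : Set V)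
    (hC : IsIDCode G' C) :
    IsIDCode (appendStar G' v k) (Sum.inl '' C ∪ Set.range (fun i : Fin k => Sum.inr (some i))) := by
  obtain ⟨hd, hs⟩ := hC
  set D : Set (V ⊕ Option (Fin k)) := Sum.inl '' C ∪ Set.range (fun i : Fin k => Sum.inr (some i))
    with hD
  have hVV : ∀ x y : V, Sum.inl y ∈ closedNbhd (appendStar G' v k) (Sum.inl x) ∩ D ↔
      y ∈ closedNbhd G' x ∩ C := by
    intro x y
    have h1 : G'.Adj x y → x ≠ y := fun h => h.ne
    have h2 : G'.Adj x y ↔ G'.Adj y x := G'.adj_comm x y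
    simp [closedNbhd, appendStar, hD]
    grind
  have hVl : ∀ (x : V) (i : Fin k),
      Sum.inr (some i) ∉ closedNbhd (appendStar G' v k) (Sum.inl x) ∩ D := by
    intro x i
    simp [closedNbhd, appendStar]
  have hul : ∀ (i : Fin k),
      Sum.inr (some i) ∈ closedNbhd (appendStar G' v k) (Sum.inr none) ∩ D := by
    intro i
    simp [closedNbhd, appendStar, hD]
  have hll : ∀ (i j : Fin k),
      Sum.inr (some i) ∈ closedNbhd (appendStar G' v k) (Sum.inr (some j)) ∩ D ↔ i = j := by
    intro i j
    simp [closedNbhd, appendStar, hD]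
  let i0 : Fin k := ⟨0, by omega⟩
  let i1 : Fin k := ⟨1, by omega⟩
  have h01 : i0 ≠ i1 := by simp [i0, i1]
  refine ⟨?_, ?_⟩
  · rintro (x | _ | i)
    · obtain ⟨y, hy⟩ := hd x
      exact ⟨Sum.inl y, (hVV x y).2 hy⟩
    · exact ⟨_, hul i0⟩
    · exact ⟨_, (hll i i).2 rfl⟩
  · rintro (x | _ | i) (y | _ | j) hne heq
    · apply hs x y (fun h => hne (by rw [h]))
      ext z
      rw [← hVV, ← hVV, heq]
    · exact hVl x i0 (heq ▸ hul i0)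
    · exact hVl x j (heq ▸ (hll j j).2 rfl)
    · exact hVl y i0 (heq ▸ hul i0)
    · exact hne rfl
    · have a := (hll i0 j).1 (heq ▸ hul i0)
      have b := (hll i1 j).1 (heq ▸ hul i1)
      exact h01 (a.trans b.symm)
    · exact hVl y i (heq ▸ (hll i i).2 rfl)
    · have a := (hll i0 i).1 (heq ▸ hul i0)
      have b := (hll i1 i).1 (heq ▸ hul i1)
      exact h01 (a.trans b.symm)
    · exact hne (by rw [(hll i j).1 (heq ▸ (hll i i).2 rfl)])

lemma aux_idNum {V : Type*} [Fintype V] (G' : SimpleGraph V) (hG' : Identifiable G') (v : V)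
    (k : ℕ) (hk : 2 ≤ k) : idNum (appendStar G' v k) ≤ idNum G' + k := by
  have hne : {m | ∃ C : Set V, C.ncard = m ∧ IsIDCode G' C}.Nonempty := by
    refine ⟨_, Set.univ, rfl, fun x => ⟨x, by simp [closedNbhd]⟩, fun x y h => ?_⟩
    simpa using hG' x y h
  obtain ⟨C, hc, hC⟩ := Nat.sInf_mem hne
  have h1 := aux_code G' v k hk C hC
  have h0 : idNum (appendStar G' v k) ≤ _ := Nat.sInf_le (Set.mem_setOf.2 ⟨_, rfl, h1⟩)
  refine h0.trans ?_
  refine (Set.ncard_union_le _ _).trans ?_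
  have h2 : (Sum.inl '' C : Set (V ⊕ Option (Fin k))).ncard = C.ncard :=
    Set.ncard_image_of_injective _ Sum.inl_injective
  have h3 : (Set.range (fun i : Fin k => (Sum.inr (some i) : V ⊕ Option (Fin k)))).ncard = k := by
    rw [← Set.image_univ, Set.ncard_image_of_injective _
      (fun a b h => by simpa using h), Set.ncard_univ, Nat.card_fin]
  rw [h2, h3, hc]
  rfl

/-- if an identifiable graph `G'` of order `n₀` and maximum degree
`Δ₀ ≥ 2` satisfies `γ^ID(G') ≤ ((Δ₀−1)/Δ₀)·n₀ + c`, then the graph obtained by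
appending a `Δ₁`-star (`Δ₁ ≥ 3`) by a leaf onto a vertex `v` of `G'` satisfies
`γ^ID(G) ≤ ((M−1)/M)·(n₀+Δ₁) + c` where `M = max(Δ₀, Δ₁)`. -/
theorem stmt_6 {V : Type*} [Fintype V] (c : ℝ) (G' : SimpleGraph V)
    (hG' : Identifiable G') (Δ₀ : ℕ) (hΔ₀ : 2 ≤ Δ₀) (hmax : maxDeg G' = Δ₀)
    (hbound : (idNum G' : ℝ) ≤ ((Δ₀ : ℝ) - 1) / Δ₀ * (Fintype.card V) + c)
    (Δ₁ : ℕ) (hΔ₁ : 3 ≤ Δ₁) (v : V) :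
    (idNum (appendStar G' v (Δ₁ - 1)) : ℝ) ≤
      ((max Δ₀ Δ₁ : ℕ) - 1 : ℝ) / ((max Δ₀ Δ₁ : ℕ) : ℝ) *
        ((Fintype.card V : ℝ) + (Δ₁ : ℝ)) + c := by
  have h1 := aux_idNum G' hG' v (Δ₁ - 1) (by omega)
  have h2 : (idNum (appendStar G' v (Δ₁ - 1)) : ℝ) ≤ idNum G' + ((Δ₁ : ℝ) - 1) := by
    have : ((Δ₁ - 1 : ℕ) : ℝ) = (Δ₁ : ℝ) - 1 := by
      rw [Nat.cast_sub (by omega)]; simp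
    rw [← this]
    exact_mod_cast h1
  have hM0 : (Δ₀ : ℝ) ≤ ((max Δ₀ Δ₁ : ℕ) : ℝ) := by exact_mod_cast le_max_left _ _
  have hM1 : (Δ₁ : ℝ) ≤ ((max Δ₀ Δ₁ : ℕ) : ℝ) := by exact_mod_cast le_max_right _ _
  generalize ((max Δ₀ Δ₁ : ℕ) : ℝ) = M at hM0 hM1 ⊢
  have p0 : (0 : ℝ) < Δ₀ := by exact_mod_cast (by omega : 0 < Δ₀)
  have pM : 0 < M := p0.trans_le hM0
  have e0 : ((Δ₀ : ℝ) - 1) / Δ₀ ≤ (M - 1) / M := by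
    rw [div_le_div_iff₀ p0 pM]; nlinarith
  have e1 : (Δ₁ : ℝ) - 1 ≤ (M - 1) / M * Δ₁ := by
    rw [div_mul_eq_mul_div, le_div_iff₀ pM]; nlinarith
  have e2 := mul_le_mul_of_nonneg_right e0 (Nat.cast_nonneg (α := ℝ) (Fintype.card V))
  rw [mul_add]
  linarith
end

section
/- Let T_2 be the tree on the 7 vertices {w, x, y, z, u, a, b} with edges wx, xy, yz, zu, ua, ub (a path on 4 vertices with a 3-star appended by one of its leaves onto the endpoint z). Then γ^ID(T_2) = 5 = (2/3)·7 + 1/3. -/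
open SimpleGraph

/-- The tree `T₂`: a path `w x y z` (vertices `0 1 2 3`) with a 3-star appended by one
of its leaves onto `z`; `u = 4`, `a = 5`, `b = 6`. -/
def T2graph : SimpleGraph (Fin 7) :=
  SimpleGraph.fromEdgeSet {s(0, 1), s(1, 2), s(2, 3), s(3, 4), s(4, 5), s(4, 6)}

/-- Closed neighbourhoods of `T2graph` as finsets. -/
def t2nb : Fin 7 → Finset (Fin 7) :=
  ![{0, 1}, {0, 1, 2}, {1, 2, 3}, {2, 3, 4}, {3, 4, 5, 6}, {4, 5}, {4, 6}]

theorem t2_closedNbhd (v : Fin 7) : closedNbhd T2graph v = (t2nb v : Set (Fin 7)) := by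
  ext x
  simp only [closedNbhd, T2graph, Set.mem_insert_iff, SimpleGraph.mem_neighborSet,
    SimpleGraph.fromEdgeSet_adj, Set.mem_singleton_iff, Finset.mem_coe]
  revert v x
  decide

theorem t2_isIDCode (C : Finset (Fin 7)) : IsIDCode T2graph (C : Set (Fin 7)) ↔
    (∀ v, (t2nb v ∩ C).Nonempty) ∧ ∀ u w, u ≠ w → t2nb u ∩ C ≠ t2nb w ∩ C := by
  simp only [IsIDCode, t2_closedNbhd, ← Finset.coe_inter, Finset.coe_nonempty, ne_eq,
    Finset.coe_inj]

set_option maxRecDepth 100000 in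
theorem t2_lower : ∀ C : Finset (Fin 7), ((∀ v, (t2nb v ∩ C).Nonempty) ∧
    ∀ u w, u ≠ w → t2nb u ∩ C ≠ t2nb w ∩ C) → 5 ≤ C.card := by
  decide +kernel

theorem t2_idNum : idNum T2graph = 5 := by
  apply le_antisymm
  · apply Nat.sInf_le
    refine ⟨(({1, 2, 3, 4, 5} : Finset (Fin 7)) : Set (Fin 7)), ?_, ?_⟩
    · rw [Set.ncard_coe_finset]; rfl
    · rw [t2_isIDCode]; decide +kernel
  · apply le_csInf
    · refine ⟨_, (({1, 2, 3, 4, 5} : Finset (Fin 7)) : Set (Fin 7)), rfl, ?_⟩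
      rw [t2_isIDCode]; decide +kernel
    · rintro k ⟨C, rfl, hC⟩
      classical
      obtain ⟨D, rfl⟩ : ∃ D : Finset (Fin 7), (D : Set (Fin 7)) = C :=
        ⟨C.toFinite.toFinset, by simp⟩
      rw [Set.ncard_coe_finset]
      exact t2_lower D ((t2_isIDCode D).1 hC)

/-- `γ^ID(T₂) = 5 = (2/3)·7 + 1/3`. -/
theorem stmt_7 : idNum T2graph = 5 ∧ (idNum T2graph : ℝ) = 2 / 3 * 7 + 1 / 3 := by
  refine ⟨t2_idNum, ?_⟩
  rw [t2_idNum]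
  norm_num
end

section
/- Let T_3 be the tree on the 10 vertices {w, x, y, z, u₁, a₁, b₁, u₂, a₂, b₂} with edges wx, xy, yz, zu₁, u₁a₁, u₁b₁, zu₂, u₂a₂, u₂b₂ (a path on 4 vertices with two 3-stars each appended by a leaf onto the endpoint z). Then γ^ID(T_3) = 7 = (2/3)·10 + 1/3. -/
open SimpleGraph

/-- The tree `T₃`: a path `w x y z` (vertices `0 1 2 3`) with two 3-stars appended by
a leaf each onto `z`; `u₁ = 4`, `a₁ = 5`, `b₁ = 6`, `u₂ = 7`, `a₂ = 8`, `b₂ = 9`. -/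
def T3graph : SimpleGraph (Fin 10) :=
  SimpleGraph.fromEdgeSet
    {s(0, 1), s(1, 2), s(2, 3), s(3, 4), s(4, 5), s(4, 6), s(3, 7), s(7, 8), s(7, 9)}

/-- Closed neighborhoods of `T₃`, as finsets. -/
def nbT3 (v : Fin 10) : Finset (Fin 10) :=
  (![{0, 1}, {0, 1, 2}, {1, 2, 3}, {2, 3, 4, 7}, {3, 4, 5, 6}, {4, 5}, {4, 6},
    {3, 7, 8, 9}, {7, 8}, {7, 9}] : Fin 10 → Finset (Fin 10)) v

theorem closedNbhd_T3 (v : Fin 10) : closedNbhd T3graph v = (nbT3 v : Set (Fin 10)) := by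
  ext x
  have h : (x = v ∨ (s(v, x) ∈ ({s(0, 1), s(1, 2), s(2, 3), s(3, 4), s(4, 5), s(4, 6), s(3, 7),
      s(7, 8), s(7, 9)} : Finset (Sym2 (Fin 10))) ∧ v ≠ x)) ↔ x ∈ nbT3 v := by
    revert v x
    decide
  rw [Finset.mem_coe, ← h]
  simp [closedNbhd, T3graph]

theorem isIDCode_T3 (C : Finset (Fin 10)) : IsIDCode T3graph (C : Set (Fin 10)) ↔
    (∀ v, (nbT3 v ∩ C).Nonempty) ∧ ∀ u w, u ≠ w → nbT3 u ∩ C ≠ nbT3 w ∩ C := by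
  unfold IsIDCode
  simp only [closedNbhd_T3, ← Finset.coe_inter, Finset.coe_nonempty, ne_eq, Finset.coe_inj]

theorem dom_T3 {C : Finset (Fin 10)} (h : ∀ v, (nbT3 v ∩ C).Nonempty) (v : Fin 10) :
    ∃ x ∈ nbT3 v, x ∈ C := by
  obtain ⟨x, hx⟩ := h v
  exact ⟨x, Finset.mem_inter.1 hx⟩

theorem sep_T3 {C : Finset (Fin 10)} (h : ∀ u w, u ≠ w → nbT3 u ∩ C ≠ nbT3 w ∩ C)
    (u w : Fin 10) (huw : u ≠ w) : ∃ x ∈ symmDiff (nbT3 u) (nbT3 w), x ∈ C := by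
  by_contra! hc
  apply h u w huw
  ext x
  have := hc x
  simp only [Finset.mem_symmDiff, Finset.mem_inter] at this ⊢
  tauto

theorem lower_T3 (C : Finset (Fin 10)) (h : IsIDCode T3graph (C : Set (Fin 10))) :
    7 ≤ C.card := by
  obtain ⟨hd, hs⟩ := (isIDCode_T3 C).1 h
  have e (u w : Fin 10) (S : Finset (Fin 10)) (hS : symmDiff (nbT3 u) (nbT3 w) = S)
      (huw : u ≠ w) : ∃ x ∈ S, x ∈ C := hS ▸ sep_T3 hs u w huw
  have d0 := dom_T3 hd 0
  have d5 := dom_T3 hd 5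
  have d6 := dom_T3 hd 6
  have d8 := dom_T3 hd 8
  have d9 := dom_T3 hd 9
  have s01 := e 0 1 {2} (by decide) (by decide)
  have s12 := e 1 2 {0, 3} (by decide) (by decide)
  have s23 := e 2 3 {1, 4, 7} (by decide) (by decide)
  have s45 := e 4 5 {3, 6} (by decide) (by decide)
  have s46 := e 4 6 {3, 5} (by decide) (by decide)
  have s56 := e 5 6 {5, 6} (by decide) (by decide)
  have s78 := e 7 8 {3, 9} (by decide) (by decide)
  have s79 := e 7 9 {3, 8} (by decide) (by decide)
  have s89 := e 8 9 {8, 9} (by decide) (by decide)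
  have n0 : nbT3 0 = {0, 1} := rfl
  have n5 : nbT3 5 = {4, 5} := rfl
  have n6 : nbT3 6 = {4, 6} := rfl
  have n8 : nbT3 8 = {7, 8} := rfl
  have n9 : nbT3 9 = {7, 9} := rfl
  simp only [n0, n5, n6, n8, n9, Finset.mem_insert, Finset.mem_singleton, exists_eq_or_imp,
    exists_eq_left] at d0 d5 d6 d8 d9 s01 s12 s23 s45 s46 s56 s78 s79 s89
  have hc : C.card = ∑ i : Fin 10, if i ∈ C then 1 else 0 := by simp
  rw [hc]
  simp only [Fin.sum_univ_ofNat, Fin.sum_univ_succ, Fin.sum_univ_zero]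
  change 7 ≤ (if (0 : Fin 10) ∈ C then 1 else 0) + ((if (1 : Fin 10) ∈ C then 1 else 0) +
    ((if (2 : Fin 10) ∈ C then 1 else 0) + ((if (3 : Fin 10) ∈ C then 1 else 0) +
    ((if (4 : Fin 10) ∈ C then 1 else 0) + ((if (5 : Fin 10) ∈ C then 1 else 0) +
    ((if (6 : Fin 10) ∈ C then 1 else 0) + ((if (7 : Fin 10) ∈ C then 1 else 0) +
    ((if (8 : Fin 10) ∈ C then 1 else 0) + ((if (9 : Fin 10) ∈ C then 1 else 0) + 0)))))))))
  by_cases h3 : (3 : Fin 10) ∈ C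
  · have A : 2 ≤ (if (4 : Fin 10) ∈ C then 1 else 0) + (if (5 : Fin 10) ∈ C then 1 else 0) +
        (if (6 : Fin 10) ∈ C then 1 else 0) := by
      split_ifs <;> simp_all
    have B : 2 ≤ (if (7 : Fin 10) ∈ C then 1 else 0) + (if (8 : Fin 10) ∈ C then 1 else 0) +
        (if (9 : Fin 10) ∈ C then 1 else 0) := by
      split_ifs <;> simp_all
    have D : 1 ≤ (if (0 : Fin 10) ∈ C then 1 else 0) + (if (1 : Fin 10) ∈ C then 1 else 0) := by
      split_ifs <;> simp_all
    rw [if_pos h3, if_pos s01]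
    omega
  · simp only [h3, false_or, or_false] at s12 s45 s46 s78 s79
    simp only [h3, s01, s12, s45, s46, s78, s79, if_true, if_false]
    rcases s23 with h | h | h <;> rw [if_pos h] <;> omega

theorem idNum_T3 : idNum T3graph = 7 := by
  have hm : 7 ∈ {k | ∃ C : Set (Fin 10), C.ncard = k ∧ IsIDCode T3graph C} := by
    refine ⟨(({0, 1, 2, 5, 6, 8, 9} : Finset (Fin 10)) : Set (Fin 10)), ?_, ?_⟩
    · rw [Set.ncard_coe_finset]
      rfl
    · rw [isIDCode_T3]
      decide
  apply le_antisymm (Nat.sInf_le hm)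
  apply le_csInf ⟨7, hm⟩
  rintro k ⟨C, rfl, hC⟩
  obtain ⟨D, rfl⟩ := C.toFinite.exists_finset_coe
  rw [Set.ncard_coe_finset]
  exact lower_T3 D hC

/-- `γ^ID(T₃) = 7 = (2/3)·10 + 1/3`. -/
theorem stmt_8 : idNum T3graph = 7 ∧ (idNum T3graph : ℝ) = 2 / 3 * 10 + 1 / 3 := by
  refine ⟨idNum_T3, ?_⟩
  rw [idNum_T3]
  norm_num
end

section
/- Let m ≥ 2 and Δ ≥ 3 be integers and let 1 ≤ k ≤ m. Let G be the tree on n = m + Δ vertices obtained from the path p_1 p_2 … p_m by adding new vertices u, l_1, …, l_{Δ−1} together with the edge p_k u and the edges u l_i (1 ≤ i ≤ Δ−1) (a Δ-star appended by one of its leaves onto the vertex p_k of the path). If at least one of the following holds: (1) m ≠ 4, or (2) m = 4 and 2 ≤ k ≤ 3, or (3) m = 4, k ∈ {1, 4} and Δ ≥ 4, then γ^ID(G) ≤ ((Δ−1)/Δ)·n. -/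
open SimpleGraph

section helpers
variable {V : Type*} (G' : SimpleGraph V) (v : V) (k : ℕ)

theorem as_ll (x y : V) : Sum.inl x ∈ closedNbhd (appendStar G' v k) (Sum.inl y) ↔
    x ∈ closedNbhd G' y := by
  simp only [closedNbhd, appendStar, Set.mem_insert_iff, mem_neighborSet, fromRel_adj]
  constructor
  · rintro (h | ⟨_, h⟩)
    · left; simpa using h
    · right; simpa [G'.adj_comm x y] using h
  · rintro (h | h)
    · left; simpa using h
    · right; simpa [G'.adj_comm x y, h] using h.ne

theorem as_lu (y : V) : Sum.inr none ∈ closedNbhd (appendStar G' v k) (Sum.inl y) ↔ y = v := by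
  simp [closedNbhd, appendStar]

theorem as_ul (x : V) : Sum.inl x ∈ closedNbhd (appendStar G' v k) (Sum.inr none) ↔ x = v := by
  simp [closedNbhd, appendStar]

theorem as_ls (y : V) (i : Fin k) :
    ¬ Sum.inr (some i) ∈ closedNbhd (appendStar G' v k) (Sum.inl y) := by
  simp [closedNbhd, appendStar]

theorem as_sl (y : V) (i : Fin k) :
    ¬ Sum.inl y ∈ closedNbhd (appendStar G' v k) (Sum.inr (some i)) := by
  simp [closedNbhd, appendStar]

theorem as_uu : Sum.inr none ∈ closedNbhd (appendStar G' v k) (Sum.inr none) := by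
  simp [closedNbhd, appendStar]

theorem as_us (i : Fin k) :
    Sum.inr (some i) ∈ closedNbhd (appendStar G' v k) (Sum.inr none) := by
  simp [closedNbhd, appendStar]

theorem as_su (i : Fin k) :
    Sum.inr none ∈ closedNbhd (appendStar G' v k) (Sum.inr (some i)) := by
  simp [closedNbhd, appendStar]

theorem as_ss (i j : Fin k) :
    Sum.inr (some i) ∈ closedNbhd (appendStar G' v k) (Sum.inr (some j)) ↔ i = j := by
  simp [closedNbhd, appendStar]

theorem codeB (hk : 2 ≤ k) (A : Set V) (hA : IsIDCode G' A) :
    IsIDCode (appendStar G' v k) (Sum.inl '' A ∪ Sum.inr '' {none}ᶜ) := by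
  have h01 : (⟨0, by omega⟩ : Fin k) ≠ ⟨1, by omega⟩ := by simp
  constructor
  · rintro (y | _ | i)
    · obtain ⟨x, hx, hxA⟩ := hA.1 y
      exact ⟨Sum.inl x, (as_ll ..).2 hx, by simp [hxA]⟩
    · exact ⟨Sum.inr (some ⟨0, by omega⟩), as_us .., by simp⟩
    · exact ⟨Sum.inr (some i), (as_ss ..).2 rfl, by simp⟩
  · intro a b hab h
    have hl : ∀ x ∈ A, (Sum.inl x ∈ closedNbhd (appendStar G' v k) a ↔
        Sum.inl x ∈ closedNbhd (appendStar G' v k) b) := by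
      intro x hx
      have := Set.ext_iff.1 h (Sum.inl x)
      simpa [hx] using this
    have hs : ∀ i, (Sum.inr (some i) ∈ closedNbhd (appendStar G' v k) a ↔
        Sum.inr (some i) ∈ closedNbhd (appendStar G' v k) b) := by
      intro x
      have := Set.ext_iff.1 h (Sum.inr (some x))
      simpa using this
    have h0 := hs ⟨0, by omega⟩
    have h1 := hs ⟨1, by omega⟩
    clear h
    rcases a with a | _ | i <;> rcases b with b | _ | j
    · simp only [as_ll] at hl
      apply hA.2 a b (by simpa using hab)
      ext x
      simp only [Set.mem_inter_iff]
      grind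
    · simp [as_ls, as_us] at h0
    · have := hs j
      simp [as_ls, as_ss] at this
    · simp [as_ls, as_us] at h0
    · simp at hab
    · simp only [as_us, as_ss, true_iff] at h0 h1
      grind
    · have := hs i
      simp [as_ls, as_ss] at this
    · simp only [as_us, as_ss, iff_true] at h0 h1
      grind
    · have := hs i
      simp [as_ss] at this
      simp [this] at hab

theorem codeA (hk : 2 ≤ k) (A : Set V) (hv : v ∈ A) (hd : ∀ y, (closedNbhd G' y ∩ A).Nonempty)
    (hA : ∀ a b, a ≠ v → b ≠ v → a ≠ b → closedNbhd G' a ∩ A ≠ closedNbhd G' b ∩ A) :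
    IsIDCode (appendStar G' v k) (Sum.inl '' A ∪ Sum.inr '' {some ⟨0, by omega⟩}ᶜ) := by
  have h01 : (⟨1, by omega⟩ : Fin k) ≠ ⟨0, by omega⟩ := by simp
  have hvv : v ∈ closedNbhd G' v := by simp [closedNbhd]
  constructor
  · rintro (y | _ | i)
    · obtain ⟨x, hx, hxA⟩ := hd y
      exact ⟨Sum.inl x, (as_ll ..).2 hx, by simp [hxA]⟩
    · exact ⟨Sum.inr none, as_uu .., by simp⟩
    · exact ⟨Sum.inr none, as_su .., by simp⟩
  · intro a b hab h
    have hl : ∀ x ∈ A, (Sum.inl x ∈ closedNbhd (appendStar G' v k) a ↔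
        Sum.inl x ∈ closedNbhd (appendStar G' v k) b) := by
      intro x hx
      have := Set.ext_iff.1 h (Sum.inl x)
      simpa [hx] using this
    have hs : ∀ i, i ≠ ⟨0, by omega⟩ → (Sum.inr (some i) ∈ closedNbhd (appendStar G' v k) a ↔
        Sum.inr (some i) ∈ closedNbhd (appendStar G' v k) b) := by
      intro x hx
      have := Set.ext_iff.1 h (Sum.inr (some x))
      simpa [hx] using this
    have hu : (Sum.inr none ∈ closedNbhd (appendStar G' v k) a ↔
        Sum.inr none ∈ closedNbhd (appendStar G' v k) b) := by
      have := Set.ext_iff.1 h (Sum.inr none)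
      simpa using this
    have h1 := hs ⟨1, by omega⟩ h01
    have hlv := hl v hv
    clear h
    rcases a with a | _ | i <;> rcases b with b | _ | j
    · simp only [as_ll] at hl
      simp only [as_lu] at hu
      have hne : a ≠ b := by simpa using hab
      apply hA a b (by grind) (by grind) hne
      ext x
      simp only [Set.mem_inter_iff]
      grind
    · simp [as_ls, as_us] at h1
    · simp only [as_lu, as_su, iff_true] at hu
      subst hu
      simp [as_ll, as_sl, hvv] at hlv
    · simp [as_ls, as_us] at h1
    · simp at hab
    · simp [as_ul, as_sl] at hlv
    · simp only [as_lu, as_su, true_iff] at hu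
      subst hu
      simp [as_ll, as_sl, hvv] at hlv
    · simp [as_ul, as_sl] at hlv
    · have hne : i ≠ j := by simpa using hab
      have hi := hs i
      have hj := hs j
      simp only [as_ss] at hi hj
      grind

theorem code_card {m : ℕ} (A : Set (Fin m)) (b : Option (Fin k)) (G : SimpleGraph (Fin m ⊕ Option (Fin k)))
    (N : ℕ) (hN : A.ncard ≤ N) (h : IsIDCode G (Sum.inl '' A ∪ Sum.inr '' {b}ᶜ)) :
    idNum G ≤ N + k := by
  have h1 : idNum G ≤ (Sum.inl '' A ∪ Sum.inr '' {b}ᶜ : Set (Fin m ⊕ Option (Fin k))).ncard :=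
    Nat.sInf_le ⟨_, rfl, h⟩
  have h2 := Set.ncard_union_le (Sum.inl '' A : Set (Fin m ⊕ Option (Fin k))) (Sum.inr '' {b}ᶜ)
  have h3 := Set.ncard_image_le (f := (Sum.inl : Fin m → Fin m ⊕ Option (Fin k))) (Set.toFinite A)
  have h4 := Set.ncard_image_le (f := (Sum.inr : _ → Fin m ⊕ Option (Fin k)))
    (Set.toFinite ({b}ᶜ : Set (Option (Fin k))))
  have h5 : ({b}ᶜ : Set (Option (Fin k))).ncard = k := by
    rw [Set.ncard_compl]; simp
  omega

end helpers

theorem path_nb {m : ℕ} (x y : Fin m) : x ∈ closedNbhd (pathGraph m) y ↔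
    (x.val = y.val ∨ y.val + 1 = x.val ∨ x.val + 1 = y.val) := by
  simp [closedNbhd, pathGraph_adj, Fin.ext_iff]

def pathCode (m : ℕ) : Set (Fin m) := {i | i.val % 2 = 0 ∨ (m % 2 = 0 ∧ i.val + 3 = m)}

theorem pathCode_card (m : ℕ) : (pathCode m).ncard ≤ m / 2 + 1 := by
  have := Set.ncard_le_ncard_of_injOn (s := pathCode m)
    (t := (Finset.range (m / 2 + 1) : Set ℕ))
    (fun i => if i.val % 2 = 0 then i.val / 2 else m / 2)
    (by
      intro i hi
      simp only [Finset.coe_range, Set.mem_Iio]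
      split <;> omega)
    (by
      intro i hi j hj hij
      simp only [pathCode, Set.mem_ofPred_eq] at hi hj
      simp only at hij
      apply Fin.ext
      split at hij <;> split at hij <;> omega)
    (Finset.finite_toSet _)
  rwa [Set.ncard_coe_finset, Finset.card_range] at this

theorem path_sep (m : ℕ) (hm : 3 ≤ m) (a b : ℕ) (hab : a < b) (hb : b < m)
    (key : ∀ x, ∀ hx : x < m, (x % 2 = 0 ∨ (m % 2 = 0 ∧ x + 3 = m)) →
        ((x = a ∨ a + 1 = x ∨ x + 1 = a) ↔ (x = b ∨ b + 1 = x ∨ x + 1 = b))) : False := by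
  by_cases ha : a % 2 = 1
  · have := key (a - 1) (by omega) (by omega)
    omega
  by_cases hb2 : b % 2 = 0
  · have := key b (by omega) (by omega)
    omega
  by_cases hb1 : b + 1 < m
  · have := key (b + 1) (by omega) (by omega)
    omega
  by_cases hc : a + 1 = b
  · have := key (m - 3) (by omega) (by omega)
    omega
  · have := key a (by omega) (by omega)
    omega

theorem pathCode_id (m : ℕ) (hm : 3 ≤ m) : IsIDCode (pathGraph m) (pathCode m) := by
  constructor
  · intro y
    by_cases h : y.val % 2 = 0
    · exact ⟨y, (path_nb ..).2 (by simp), Or.inl h⟩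
    · exact ⟨⟨y.val - 1, by omega⟩, (path_nb ..).2 (by simp; omega), Or.inl (by simp; omega)⟩
  · intro a b hab h
    have key : ∀ x, ∀ hx : x < m, (x % 2 = 0 ∨ (m % 2 = 0 ∧ x + 3 = m)) →
        ((x = a.val ∨ a.val + 1 = x ∨ x + 1 = a.val) ↔
         (x = b.val ∨ b.val + 1 = x ∨ x + 1 = b.val)) := by
      intro x hx hc
      have := Set.ext_iff.1 h ⟨x, hx⟩
      simpa [path_nb, pathCode, hc] using this
    have hne : a.val ≠ b.val := fun h => hab (Fin.ext h)
    rcases Nat.lt_or_gt_of_ne hne with hlt | hlt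
    · exact path_sep m hm a.val b.val hlt b.2 key
    · exact path_sep m hm b.val a.val hlt a.2 (fun x hx hc => (key x hx hc).symm)

theorem nat_bound (m Δ N : ℕ) (hΔ : 3 ≤ Δ) (c : ℕ) (h : c ≤ N + (Δ - 1)) (hN : N * Δ + m ≤ m * Δ) :
    (c : ℝ) ≤ ((Δ : ℝ) - 1) / Δ * ((m : ℝ) + (Δ : ℝ)) := by
  obtain ⟨d, rfl⟩ : ∃ d, Δ = d + 1 := ⟨Δ - 1, by omega⟩
  have h' : (c : ℝ) ≤ N + d := by exact_mod_cast h
  have hN' : (N : ℝ) * (d + 1) + m ≤ m * (d + 1) := by exact_mod_cast hN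
  refine h'.trans ?_
  have hd : (0 : ℝ) < (d : ℝ) + 1 := by positivity
  push_cast
  rw [div_mul_eq_mul_div, le_div_iff₀ hd]
  nlinarith

theorem stmt_9 (m Δ k : ℕ) (hm : 2 ≤ m) (hΔ : 3 ≤ Δ) (hk1 : 1 ≤ k) (hkm : k ≤ m)
    (hcond : m ≠ 4 ∨ (m = 4 ∧ 2 ≤ k ∧ k ≤ 3) ∨ (m = 4 ∧ (k = 1 ∨ k = 4) ∧ 4 ≤ Δ)) :
    (idNum (appendStar (SimpleGraph.pathGraph m) ⟨k - 1, by omega⟩ (Δ - 1)) : ℝ) ≤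
      ((Δ : ℝ) - 1) / Δ * ((m : ℝ) + (Δ : ℝ)) := by
  by_cases hB : 3 ≤ m ∧ (m ≠ 4 ∨ 4 ≤ Δ)
  · refine nat_bound m Δ (m / 2 + 1) hΔ _
      (code_card _ _ _ _ _ (pathCode_card m) (codeB _ _ _ (by omega) _ (pathCode_id m hB.1))) ?_
    by_cases h4 : m = 4
    · subst h4; omega
    · have h1 : (m / 2 + 1) * 3 + m ≤ m * 3 := by omega
      have h2 : m / 2 + 1 ≤ m := by omega
      nlinarith
  · by_cases h2 : m = 2
    · subst h2
      refine nat_bound 2 Δ 1 hΔ _ (code_card _ {⟨k - 1, by omega⟩} _ _ 1 (by simp)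
        (codeA _ _ _ (by omega) _ (by simp) ?_ ?_)) (by omega)
      · intro y
        refine ⟨⟨k - 1, by omega⟩, (path_nb ..).2 ?_, rfl⟩
        have := y.2
        simp only
        omega
      · intro a b ha hb hab
        have := a.2
        have := b.2
        simp only [ne_eq, Fin.ext_iff] at ha hb hab
        omega
    · obtain rfl : m = 4 := by omega
      have hk : 2 ≤ k ∧ k ≤ 3 := by omega
      refine nat_bound 4 Δ 2 hΔ _ (code_card _ {1, 2} _ _ 2 (Set.ncard_insert_le _ _ |>.trans (by simp))
        (codeA _ _ _ (by omega) _ ?_ ?_ ?_)) (by omega)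
      · simp only [Set.mem_insert_iff, Set.mem_singleton_iff, Fin.ext_iff]
        simp
        omega
      · intro y
        by_cases h : y.val ≤ 1
        · exact ⟨1, (path_nb ..).2 (by simp; omega), by simp⟩
        · exact ⟨2, (path_nb ..).2 (by simp; omega), by simp⟩
      · intro a b ha hb hab h
        have k1 := Set.ext_iff.1 h 1
        have k2 := Set.ext_iff.1 h 2
        simp [path_nb] at k1 k2
        have := a.2
        have := b.2
        simp only [ne_eq, Fin.ext_iff] at ha hb hab
        omega
end

section
/- Let m ≥ 2 and Δ ≥ 4 be integers and let 1 ≤ k ≤ m. Let G be the tree on n = m + Δ vertices obtained from the path p_1 p_2 … p_m by adding new vertices u, l_1, …, l_{Δ−1} together with the edge p_k u and the edges u l_i (1 ≤ i ≤ Δ−1). Then γ^ID(G) ≤ ((Δ−1)/Δ)·n. -/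
open SimpleGraph

/-- Membership in the closed neighborhood, path side. -/
def NearBy {V : Type*} (G : SimpleGraph V) (x y : V) : Prop := y = x ∨ G.Adj x y

theorem mem_closedNbhd_iff {V : Type*} (G : SimpleGraph V) (x y : V) :
    y ∈ closedNbhd G x ↔ (y = x ∨ G.Adj x y) := by
  simp [closedNbhd]

section NbhdLemmas
variable {V : Type*} (G : SimpleGraph V) (v : V) (k : ℕ)

theorem nb_ll (x y : V) : Sum.inl y ∈ closedNbhd (appendStar G v k) (Sum.inl x) ↔ NearBy G x y := by
  rw [mem_closedNbhd_iff]
  simp only [appendStar, SimpleGraph.fromRel_adj, NearBy]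
  constructor
  · rintro (h | ⟨h, h' | h'⟩)
    · left; simpa using h
    · right; simpa using h'
    · right; simpa [G.adj_comm] using h'
  · rintro (h | h)
    · left; simp [h]
    · right; exact ⟨by simpa using h.ne, Or.inl (Or.inl ⟨x, y, rfl, rfl, h⟩)⟩

theorem nb_ln (x : V) : Sum.inr none ∈ closedNbhd (appendStar G v k) (Sum.inl x) ↔ x = v := by
  rw [mem_closedNbhd_iff]
  simp [appendStar, SimpleGraph.fromRel_adj]

theorem nb_ls (x : V) (i : Fin k) :
    Sum.inr (some i) ∉ closedNbhd (appendStar G v k) (Sum.inl x) := by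
  rw [mem_closedNbhd_iff]
  simp [appendStar, SimpleGraph.fromRel_adj]

theorem nb_nn : Sum.inr none ∈ closedNbhd (appendStar G v k) (Sum.inr none) := by
  rw [mem_closedNbhd_iff]
  simp

theorem nb_ns (i : Fin k) : Sum.inr (some i) ∈ closedNbhd (appendStar G v k) (Sum.inr none) := by
  rw [mem_closedNbhd_iff]
  simp [appendStar, SimpleGraph.fromRel_adj]

theorem nb_sl (i : Fin k) (y : V) :
    Sum.inl y ∉ closedNbhd (appendStar G v k) (Sum.inr (some i)) := by
  rw [mem_closedNbhd_iff]
  simp [appendStar, SimpleGraph.fromRel_adj]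

theorem nb_sn (i : Fin k) : Sum.inr none ∈ closedNbhd (appendStar G v k) (Sum.inr (some i)) := by
  rw [mem_closedNbhd_iff]
  simp [appendStar, SimpleGraph.fromRel_adj]

theorem nb_ss (i j : Fin k) :
    Sum.inr (some j) ∈ closedNbhd (appendStar G v k) (Sum.inr (some i)) ↔ j = i := by
  rw [mem_closedNbhd_iff]
  simp [appendStar, SimpleGraph.fromRel_adj]

end NbhdLemmas

theorem isIDCode_of_sep {V : Type*} (G : SimpleGraph V) (C : Set V)
    (h1 : ∀ v, ∃ c ∈ C, c ∈ closedNbhd G v)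
    (h2 : ∀ a b, a ≠ b → ∃ c ∈ C, ¬ (c ∈ closedNbhd G a ↔ c ∈ closedNbhd G b)) :
    IsIDCode G C := by
  refine ⟨fun v => ?_, fun a b hab heq => ?_⟩
  · obtain ⟨c, hc, hv⟩ := h1 v
    exact ⟨c, hv, hc⟩
  · obtain ⟨c, hc, hv⟩ := h2 a b hab
    apply hv
    have := Set.ext_iff.1 heq c
    simpa [hc] using this

/-- The vertices left out of the code: the leaf `i` and the path vertices in `B`. -/
def leftOut {V : Type*} (B : Finset V) {k : ℕ} (i : Fin k) : Finset (V ⊕ Option (Fin k)) :=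
  Finset.disjSum B {some i}

theorem append_code_s10 {V : Type*} (G : SimpleGraph V) (v : V) (k : ℕ) (i0 i1 i2 : Fin k)
    (h01 : i0 ≠ i1) (h02 : i0 ≠ i2) (h12 : i1 ≠ i2) (B : Finset V)
    (hdom : ∀ x, ∃ y, y ∉ B ∧ NearBy G x y)
    (hsep : ∀ x x', x ≠ v → x' ≠ v → x ≠ x' → ∃ y, y ∉ B ∧ ¬ (NearBy G x y ↔ NearBy G x' y)) :
    IsIDCode (appendStar G v k) {c | c ∉ leftOut B i0} := by
  have cl : ∀ y, y ∉ B → (Sum.inl y : V ⊕ Option (Fin k)) ∈ {c | c ∉ leftOut B i0} := by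
    intro y hy; simpa [leftOut] using hy
  have cn : (Sum.inr none : V ⊕ Option (Fin k)) ∈ {c | c ∉ leftOut B i0} := by
    simp [leftOut]
  have cs : ∀ j, i0 ≠ j → (Sum.inr (some j) : V ⊕ Option (Fin k)) ∈ {c | c ∉ leftOut B i0} := by
    intro j hj; simpa [leftOut] using hj.symm
  -- one direction of each mixed pair
  have s1 : ∀ x, ∃ c ∈ {c | c ∉ leftOut B i0}, ¬ (c ∈ closedNbhd (appendStar G v k) (Sum.inl x) ↔
      c ∈ closedNbhd (appendStar G v k) (Sum.inr none)) := fun x =>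
    ⟨_, cs i1 h01, fun h => nb_ls G v k x i1 (h.2 (nb_ns G v k i1))⟩
  have s2 : ∀ x i, ∃ c ∈ {c | c ∉ leftOut B i0}, ¬ (c ∈ closedNbhd (appendStar G v k) (Sum.inl x) ↔
      c ∈ closedNbhd (appendStar G v k) (Sum.inr (some i))) := fun x i => by
    obtain ⟨y, hy, hxy⟩ := hdom x
    exact ⟨_, cl y hy, fun h => nb_sl G v k i y (h.1 ((nb_ll G v k x y).2 hxy))⟩
  have s3 : ∀ i, ∃ c ∈ {c | c ∉ leftOut B i0}, ¬ (c ∈ closedNbhd (appendStar G v k) (Sum.inr none) ↔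
      c ∈ closedNbhd (appendStar G v k) (Sum.inr (some i))) := fun i => by
    by_cases hi : i1 = i
    · exact ⟨_, cs i2 h02, fun h => h12 (hi.trans ((nb_ss G v k i i2).1 (h.1 (nb_ns G v k i2))).symm)⟩
    · exact ⟨_, cs i1 h01, fun h => hi ((nb_ss G v k i i1).1 (h.1 (nb_ns G v k i1)))⟩
  have flip : ∀ a b, (∃ c ∈ {c | c ∉ leftOut B i0}, ¬ (c ∈ closedNbhd (appendStar G v k) a ↔
      c ∈ closedNbhd (appendStar G v k) b)) → ∃ c ∈ {c | c ∉ leftOut B i0},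
      ¬ (c ∈ closedNbhd (appendStar G v k) b ↔ c ∈ closedNbhd (appendStar G v k) a) := by
    rintro a b ⟨c, hc, h⟩
    exact ⟨c, hc, fun h' => h h'.symm⟩
  apply isIDCode_of_sep
  · rintro (x | _ | i)
    · obtain ⟨y, hy, hxy⟩ := hdom x
      exact ⟨_, cl y hy, (nb_ll G v k x y).2 hxy⟩
    · exact ⟨_, cn, nb_nn G v k⟩
    · exact ⟨_, cn, nb_sn G v k i⟩
  · rintro (x | _ | i) (x' | _ | j) hne
    · have hne' : x ≠ x' := fun h => hne (by rw [h])
      by_cases hx : x = v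
      · exact ⟨_, cn, fun h => hne' (hx.trans ((nb_ln G v k x').1
          (h.1 ((nb_ln G v k x).2 hx))).symm)⟩
      by_cases hx' : x' = v
      · exact ⟨_, cn, fun h => hx ((nb_ln G v k x).1 (h.2 ((nb_ln G v k x').2 hx')))⟩
      obtain ⟨y, hy, h⟩ := hsep x x' hx hx' hne'
      refine ⟨_, cl y hy, ?_⟩
      rwa [nb_ll, nb_ll]
    · exact s1 x
    · exact s2 x j
    · exact flip _ _ (s1 x')
    · exact absurd rfl hne
    · exact s3 j
    · exact flip _ _ (s2 x' i)
    · exact flip _ _ (s3 i)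
    · have hij : i ≠ j := fun h => hne (by rw [h])
      by_cases hi : i0 = i
      · have hj : i0 ≠ j := fun h => hij (hi.symm.trans h)
        exact ⟨_, cs j hj, fun h => hij ((nb_ss G v k i j).1 (h.2 ((nb_ss G v k j j).2 rfl))).symm⟩
      · exact ⟨_, cs i hi, fun h => hij ((nb_ss G v k j i).1 (h.1 ((nb_ss G v k i i).2 rfl)))⟩

theorem nearBy_path (m : ℕ) (x y : Fin m) : NearBy (SimpleGraph.pathGraph m) x y ↔
    (y.val = x.val ∨ x.val + 1 = y.val ∨ y.val + 1 = x.val) := by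
  simp [NearBy, SimpleGraph.pathGraph_adj, Fin.ext_iff]

/-- The path vertices left out of the code, for paths with at least three vertices. -/
def pathOut (m : ℕ) : Finset (Fin m) :=
  Finset.univ.filter fun i => i.val % 2 = 1 ∧ i.val + 3 ≠ m

theorem pathOut_dom (m : ℕ) (hm : 3 ≤ m) (x : Fin m) :
    ∃ y, y ∉ pathOut m ∧ NearBy (SimpleGraph.pathGraph m) x y := by
  obtain ⟨x, hx⟩ := x
  by_cases h : x % 2 = 1
  · refine ⟨⟨x - 1, by omega⟩, ?_, ?_⟩
    · simp [pathOut]; omega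
    · rw [nearBy_path]; simp; omega
  · refine ⟨⟨x, hx⟩, ?_, ?_⟩
    · simp [pathOut]; omega
    · rw [nearBy_path]; simp

theorem pathOut_sep (m : ℕ) (hm : 3 ≤ m) (x x' : Fin m) (hlt : x < x') :
    ∃ y, y ∉ pathOut m ∧ ¬ (NearBy (SimpleGraph.pathGraph m) x y ↔
      NearBy (SimpleGraph.pathGraph m) x' y) := by
  obtain ⟨x, hx⟩ := x
  obtain ⟨z, hz⟩ := x'
  have hxz : x < z := hlt
  simp only [nearBy_path]
  by_contra hcon
  push Not at hcon
  have key : ∀ y, y < m → ¬ (y % 2 = 1 ∧ y + 3 ≠ m) →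
      ((y = x ∨ x + 1 = y ∨ y + 1 = x) ↔ (y = z ∨ z + 1 = y ∨ y + 1 = z)) := by
    intro y hy hyB
    exact hcon ⟨y, hy⟩ (by simpa [pathOut] using hyB)
  have k1 := key (x - 1)
  have k2 := key x
  have k3 := key z
  have k4 := key (z + 1)
  have k5 := key (m - 3)
  clear hcon key
  omega

theorem pathOut_card (m : ℕ) (hm : 3 ≤ m) : m ≤ 4 * (pathOut m).card := by
  have h : (Finset.univ : Finset (Fin ((m - 1) / 2))).card ≤ (pathOut m).card := by
    refine Finset.card_le_card_of_injOn
      (fun j => ⟨if 2 * j.val + 4 = m then m - 1 else 2 * j.val + 1, by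
        have := j.isLt; split_ifs <;> omega⟩) ?_ ?_
    · intro j _
      have := j.isLt
      simp only [pathOut, Finset.coe_filter, Set.mem_setOf_eq, Finset.mem_univ, true_and]
      split_ifs <;> omega
    · intro i _ j _ hij
      have hi := i.isLt
      have hj := j.isLt
      simp only [Fin.mk.injEq] at hij
      ext
      split_ifs at hij <;> omega
  simp only [Finset.card_univ, Fintype.card_fin] at h
  omega

theorem exists_pathSet (m : ℕ) (hm : 2 ≤ m) (v : Fin m) : ∃ B : Finset (Fin m),
    m ≤ 4 * B.card ∧
    (∀ x, ∃ y, y ∉ B ∧ NearBy (SimpleGraph.pathGraph m) x y) ∧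
    (∀ x x', x ≠ v → x' ≠ v → x ≠ x' → ∃ y, y ∉ B ∧
      ¬ (NearBy (SimpleGraph.pathGraph m) x y ↔ NearBy (SimpleGraph.pathGraph m) x' y)) := by
  rcases Nat.lt_or_ge m 3 with h3 | h3
  · obtain rfl : m = 2 := by omega
    refine ⟨{v}, by simp, ?_, ?_⟩
    · intro x
      refine ⟨⟨1 - v.val, by omega⟩, ?_, ?_⟩
      · simp [Fin.ext_iff]; omega
      · rw [nearBy_path]; simp only; omega
    · intro x x' h1 h2 h3
      exfalso
      simp only [ne_eq, Fin.ext_iff] at h1 h2 h3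
      omega
  · refine ⟨pathOut m, pathOut_card m h3, pathOut_dom m h3, ?_⟩
    intro x x' _ _ hne
    rcases lt_or_gt_of_ne hne with h | h
    · exact pathOut_sep m h3 x x' h
    · obtain ⟨y, hy, hh⟩ := pathOut_sep m h3 x' x h
      exact ⟨y, hy, fun h' => hh h'.symm⟩

/-- let `G` be the tree on `n = m + Δ` vertices obtained from the path
`p₁ … p_m` (`m ≥ 2`) by appending a `Δ`-star with `Δ ≥ 4` by one of its leaves onto
the vertex `p_k`. Then `γ^ID(G) ≤ ((Δ−1)/Δ)·n`. -/
theorem stmt_10 (m Δ k : ℕ) (hm : 2 ≤ m) (hΔ : 4 ≤ Δ) (hk1 : 1 ≤ k) (hkm : k ≤ m) :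
    (idNum (appendStar (SimpleGraph.pathGraph m) ⟨k - 1, by omega⟩ (Δ - 1)) : ℝ) ≤
      ((Δ : ℝ) - 1) / Δ * ((m : ℝ) + (Δ : ℝ)) := by
  obtain ⟨d, rfl⟩ : ∃ d, Δ = d + 4 := ⟨Δ - 4, by omega⟩
  obtain ⟨B, hB, hdom, hsep⟩ := exists_pathSet m hm ⟨k - 1, by omega⟩
  have hc := append_code_s10 (SimpleGraph.pathGraph m) ⟨k - 1, by omega⟩ (d + 4 - 1)
    ⟨0, by omega⟩ ⟨1, by omega⟩ ⟨2, by omega⟩ (by simp) (by simp) (by simp) B hdom hsep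
  have hle : idNum (appendStar (SimpleGraph.pathGraph m) ⟨k - 1, by omega⟩ (d + 4 - 1)) ≤ _ :=
    Nat.sInf_le ⟨_, rfl, hc⟩
  have hcard : {c : Fin m ⊕ Option (Fin (d + 4 - 1)) |
      c ∉ leftOut B (⟨0, by omega⟩ : Fin (d + 4 - 1))}.ncard + (B.card + 1) = m + (d + 4) := by
    have h1 : {c : Fin m ⊕ Option (Fin (d + 4 - 1)) |
      c ∉ leftOut B (⟨0, by omega⟩ : Fin (d + 4 - 1))} =
        (((leftOut B (⟨0, by omega⟩ : Fin (d + 4 - 1)))ᶜ : Finset _) : Set _) := by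
      ext c; simp
    have h2 : (leftOut B (⟨0, by omega⟩ : Fin (d + 4 - 1))).card = B.card + 1 := by
      simp [leftOut, Finset.card_disjSum]
    rw [h1, Set.ncard_coe_finset, ← h2, Finset.card_compl_add_card]
    simp
  have hN : idNum (appendStar (SimpleGraph.pathGraph m) ⟨k - 1, by omega⟩ (d + 4 - 1)) +
      (B.card + 1) ≤ m + (d + 4) := by omega
  have hR : (idNum (appendStar (SimpleGraph.pathGraph m) ⟨k - 1, by omega⟩ (d + 4 - 1)) : ℝ) +
      ((B.card : ℝ) + 1) ≤ m + (d + 4) := by exact_mod_cast hN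
  have hB' : (m : ℝ) ≤ 4 * B.card := by exact_mod_cast hB
  have hd : (0 : ℝ) ≤ d := Nat.cast_nonneg d
  have hb : (0 : ℝ) ≤ B.card := Nat.cast_nonneg _
  rw [div_mul_eq_mul_div, le_div_iff₀ (by push_cast; linarith)]
  push_cast
  nlinarith [mul_le_mul_of_nonneg_right hR (by linarith : (0 : ℝ) ≤ d + 4), mul_nonneg hd hb]
end

section
/- Let T_2 be the tree on vertices {w, x, y, z, u₁, a₁, b₁} with edges wx, xy, yz, zu₁, u₁a₁, u₁b₁. Let Δ_S ≥ 3 be an integer, let v be any vertex of T_2, and let G be the tree on n = 7 + Δ_S vertices obtained from T_2 by adding new vertices s, l_1, …, l_{Δ_S−1} together with the edge vs and the edges s l_i (1 ≤ i ≤ Δ_S−1). If it is not the case that both v = z and Δ_S = 3 (i.e., G is not isomorphic to the tree T_3), then γ^ID(G) ≤ ((Δ−1)/Δ)·n, where Δ is the maximum degree of G. -/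
open SimpleGraph

/-- Boolean-friendly closed adjacency in `T₂`. -/
def t2cl (x y : Fin 7) : Prop :=
  x = y ∨ (x, y) ∈ ([(0,1),(1,2),(2,3),(3,4),(4,5),(4,6),(1,0),(2,1),(3,2),(4,3),(5,4),(6,4)] :
    List (Fin 7 × Fin 7))

instance (x y : Fin 7) : Decidable (t2cl x y) := by unfold t2cl; infer_instance

lemma t2cl_iff (x y : Fin 7) : t2cl x y ↔ (x = y ∨ T2graph.Adj x y) := by
  unfold t2cl T2graph
  simp only [fromEdgeSet_adj, Set.mem_insert_iff, Set.mem_singleton_iff]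
  revert x y
  decide

section
variable {V : Type*} (G : SimpleGraph V) (v : V) (k : ℕ)

lemma app_ll (x y : V) : (appendStar G v k).Adj (Sum.inl x) (Sum.inl y) ↔ G.Adj x y := by
  simp only [appendStar, fromRel_adj]
  constructor
  · rintro ⟨_, h⟩
    simp at h
    exact h.elim id (fun h => h.symm)
  · intro h
    simp [h, h.ne]

lemma app_ls (x : V) : (appendStar G v k).Adj (Sum.inl x) (Sum.inr none) ↔ x = v := by
  simp [appendStar, fromRel_adj]

lemma app_sl (x : V) : (appendStar G v k).Adj (Sum.inr none) (Sum.inl x) ↔ x = v := by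
  simp [appendStar, fromRel_adj]

lemma app_lf (x : V) (i) : ¬ (appendStar G v k).Adj (Sum.inl x) (Sum.inr (some i)) := by
  simp [appendStar, fromRel_adj]

lemma app_fl (x : V) (i) : ¬ (appendStar G v k).Adj (Sum.inr (some i)) (Sum.inl x) := by
  simp [appendStar, fromRel_adj]

lemma app_sf (i) : (appendStar G v k).Adj (Sum.inr none) (Sum.inr (some i)) := by
  simp [appendStar, fromRel_adj]

lemma app_fs (i) : (appendStar G v k).Adj (Sum.inr (some i)) (Sum.inr none) := by
  simp [appendStar, fromRel_adj]

lemma app_ff (i j) : ¬ (appendStar G v k).Adj (Sum.inr (some i)) (Sum.inr (some j)) := by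
  simp [appendStar, fromRel_adj]
end

/-- The code: `A` in `T₂`, the star centre, and all new leaves but the first one. -/
def codeSet (A : Finset (Fin 7)) (m : ℕ) : Set (Fin 7 ⊕ Option (Fin (m + 2))) :=
  (Sum.inl '' (A : Set (Fin 7))) ∪
    insert (Sum.inr none) ((fun i : Fin (m + 1) => Sum.inr (some i.succ)) '' Set.univ)

lemma codeSet_ncard (A : Finset (Fin 7)) (m : ℕ) : (codeSet A m).ncard ≤ A.card + (m + 2) := by
  unfold codeSet
  refine (Set.ncard_union_le _ _).trans ?_
  have h1 : ((Sum.inl : Fin 7 → Fin 7 ⊕ Option (Fin (m + 2))) '' (A : Set (Fin 7))).ncard ≤ A.card :=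
    (Set.ncard_image_le A.finite_toSet).trans (by simp)
  have h2 := Set.ncard_insert_le (Sum.inr none : Fin 7 ⊕ Option (Fin (m + 2)))
    ((fun i : Fin (m + 1) => Sum.inr (some i.succ)) '' Set.univ)
  have h3 : ((fun i : Fin (m + 1) => (Sum.inr (some i.succ) : Fin 7 ⊕ Option (Fin (m + 2)))) ''
      Set.univ).ncard ≤ m + 1 :=
    (Set.ncard_image_le (Set.toFinite _)).trans (by simp [Set.ncard_univ])
  omega

lemma mem_code_l (A : Finset (Fin 7)) (m : ℕ) (a : Fin 7) : Sum.inl a ∈ codeSet A m ↔ a ∈ A := by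
  simp [codeSet]

lemma mem_code_s (A : Finset (Fin 7)) (m : ℕ) : Sum.inr none ∈ codeSet A m := by
  simp [codeSet]

lemma mem_code_f (A : Finset (Fin 7)) (m : ℕ) (i : Fin (m + 2)) :
    Sum.inr (some i) ∈ codeSet A m ↔ i ≠ 0 := by
  simp [codeSet, Fin.exists_succ_eq]

lemma code_ok (A : Finset (Fin 7)) (m : ℕ) (v : Fin 7) (hv : v ∈ A)
    (h1 : ∀ x, ∃ a ∈ A, t2cl x a)
    (h2 : ∀ x y, x ≠ y → x ≠ v → y ≠ v → ∃ a ∈ A, ¬ (t2cl x a ↔ t2cl y a)) :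
    IsIDCode (appendStar T2graph v (m + 2)) (codeSet A m) := by
  have key : ∀ p q, (p ∈ closedNbhd (appendStar T2graph v (m + 2)) q ∩ codeSet A m ↔
      (q = p ∨ (appendStar T2graph v (m + 2)).Adj q p) ∧ p ∈ codeSet A m) := by
    intro p q
    simp [closedNbhd, eq_comm]
  constructor
  · rintro (x | _ | i)
    · obtain ⟨a, ha, hxa⟩ := h1 x
      refine ⟨Sum.inl a, (key _ _).2 ⟨?_, (mem_code_l _ _ _).2 ha⟩⟩
      rw [app_ll]
      simpa using (t2cl_iff x a).1 hxa
    · exact ⟨Sum.inr none, (key _ _).2 ⟨Or.inl rfl, mem_code_s _ _⟩⟩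
    · exact ⟨Sum.inr none, (key _ _).2 ⟨Or.inr (app_fs _ _ _ _), mem_code_s _ _⟩⟩
  · intro p q hpq he
    have E : ∀ r ∈ codeSet A m, ((p = r ∨ (appendStar T2graph v (m + 2)).Adj p r) ↔
        (q = r ∨ (appendStar T2graph v (m + 2)).Adj q r)) := by
      intro r hr
      have := Set.ext_iff.1 he r
      rw [key, key] at this
      tauto
    have El : ∀ a ∈ A, _ := fun a ha => E (Sum.inl a) ((mem_code_l _ _ _).2 ha)
    have Es := E _ (mem_code_s A m)
    have Ef : ∀ i : Fin (m + 2), i ≠ 0 → _ := fun i hi => E (Sum.inr (some i)) ((mem_code_f A m i).2 hi)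
    have h10 : (1 : Fin (m + 2)) ≠ 0 := by simp
    clear E he key
    rcases p with x | _ | i <;> rcases q with y | _ | j <;>
      simp only [app_ll, app_ls, app_sl, app_lf, app_fl, app_sf, app_fs, app_ff, Sum.inl.injEq,
        Sum.inr.injEq, Option.some.injEq, reduceCtorEq, ← t2cl_iff, or_false, false_or, or_true,
        true_or, true_iff, iff_true, iff_false, false_iff, ne_eq] at El Es Ef hpq
    · by_cases hx : x = v
      · exact hpq (hx.trans (Es.1 hx).symm)
      · obtain ⟨a, ha, h⟩ := h2 x y hpq hx (fun h => hx (Es.2 h))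
        exact h (El a ha)
    · exact (Ef 1 h10)
    · obtain ⟨a, ha, h⟩ := h1 x
      exact El a ha h
    · exact (Ef 1 h10) trivial
    · simp at hpq
    · exact El v hv rfl
    · obtain ⟨a, ha, h⟩ := h1 y
      exact El a ha h
    · exact El v hv rfl
    · by_cases hi : i = 0
      · by_cases hj : j = 0
        · exact hpq (hi.trans hj.symm)
        · exact hpq ((Ef j hj).2 rfl)
      · exact hpq ((Ef i hi).1 rfl).symm

lemma idNum_le (A : Finset (Fin 7)) (m : ℕ) (v : Fin 7) (hv : v ∈ A)
    (h1 : ∀ x, ∃ a ∈ A, t2cl x a)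
    (h2 : ∀ x y, x ≠ y → x ≠ v → y ≠ v → ∃ a ∈ A, ¬ (t2cl x a ↔ t2cl y a)) :
    idNum (appendStar T2graph v (m + 2)) ≤ A.card + (m + 2) :=
  le_trans (Nat.sInf_le (show (codeSet A m).ncard ∈ {k | ∃ C : Set (Fin 7 ⊕ Option (Fin (m + 2))),
    C.ncard = k ∧ IsIDCode (appendStar T2graph v (m + 2)) C} from
      ⟨_, rfl, code_ok A m v hv h1 h2⟩)) (codeSet_ncard A m)

lemma le_maxDeg_of_inj {V : Type*} [Fintype V] (G : SimpleGraph V) (v : V) {ι : Type*} [Fintype ι]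
    (f : ι → V) (hf : Function.Injective f) (h : ∀ i, G.Adj v (f i)) :
    Fintype.card ι ≤ maxDeg G := by
  have h1 : (G.neighborSet v).ncard ≤ maxDeg G :=
    Finset.le_sup (f := fun v => (G.neighborSet v).ncard) (Finset.mem_univ v)
  refine le_trans ?_ h1
  rw [← Nat.card_eq_fintype_card, ← Set.ncard_range_of_injective hf]
  exact Set.ncard_le_ncard (by rintro _ ⟨i, rfl⟩; exact h i) (Set.toFinite _)

lemma maxDeg_ge (v : Fin 7) (m : ℕ) : m + 3 ≤ maxDeg (appendStar T2graph v (m + 2)) := by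
  have := le_maxDeg_of_inj (appendStar T2graph v (m + 2)) (Sum.inr none)
    (ι := Option (Fin (m + 2))) (fun o => o.elim (Sum.inl v) (fun i => Sum.inr (some i)))
    (by rintro (_ | i) (_ | j) <;> simp)
    (by rintro (_ | i)
        · exact (app_sl _ _ _ _).2 rfl
        · exact app_sf _ _ _ _)
  rw [Fintype.card_option, Fintype.card_fin] at this
  exact this

lemma maxDeg_ge_four (m : ℕ) : 4 ≤ maxDeg (appendStar T2graph 4 (m + 2)) := by
  have := le_maxDeg_of_inj (appendStar T2graph 4 (m + 2)) (Sum.inl 4)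
    (ι := Option {x : Fin 7 // x = 3 ∨ x = 5 ∨ x = 6})
    (fun o => o.elim (Sum.inr none) (fun i => Sum.inl i.1))
    (by rintro (_ | i) (_ | j) <;> simp [Subtype.ext_iff])
    (by rintro (_ | ⟨i, hi⟩)
        · exact (app_ls _ _ _ _).2 rfl
        · refine (app_ll _ _ _ _ _).2 ?_
          have h : t2cl 4 i := by revert i; decide
          rcases (t2cl_iff 4 i).1 h with h | h
          · subst h; exact absurd hi (by decide)
          · exact h)
  exact le_trans (by decide) this

lemma final_ineq (c M m d : ℕ) (hM : 1 ≤ M) (hMm : M ≤ m) (h : c * M + (7 + d) ≤ M * (7 + d)) :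
    (c : ℝ) ≤ ((m : ℝ) - 1) / (m : ℝ) * ((7 : ℝ) + (d : ℝ)) := by
  have h' : (c : ℝ) * M + (7 + d) ≤ M * (7 + d) := by exact_mod_cast h
  have hM' : (1 : ℝ) ≤ M := by exact_mod_cast hM
  have hm' : (M : ℝ) ≤ m := by exact_mod_cast hMm
  have hd : (0 : ℝ) ≤ d := Nat.cast_nonneg d
  have hc : (0 : ℝ) ≤ c := Nat.cast_nonneg c
  have hm0 : (0 : ℝ) < m := by linarith
  rw [div_mul_eq_mul_div, le_div_iff₀ hm0]
  have h3 : (c : ℝ) ≤ 7 + d := by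
    by_contra hcon
    push Not at hcon
    nlinarith
  nlinarith [mul_nonneg (sub_nonneg.2 hm') (sub_nonneg.2 h3)]

/-- let `G` be the tree on `n = 7 + Δ_S` vertices obtained from `T₂` by
appending a `Δ_S`-star (`Δ_S ≥ 3`) by one of its leaves onto a vertex `v` of `T₂`.
If not both `v = z` and `Δ_S = 3` (i.e. `G ≇ T₃`), then `γ^ID(G) ≤ ((Δ−1)/Δ)·n`,
where `Δ` is the maximum degree of `G`. -/
theorem stmt_11 (ΔS : ℕ) (hΔS : 3 ≤ ΔS) (v : Fin 7)
    (hne : ¬ (v = 3 ∧ ΔS = 3)) :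
    (idNum (appendStar T2graph v (ΔS - 1)) : ℝ) ≤
      ((maxDeg (appendStar T2graph v (ΔS - 1)) : ℝ) - 1) /
        (maxDeg (appendStar T2graph v (ΔS - 1)) : ℝ) * ((7 : ℝ) + (ΔS : ℝ)) := by
  obtain ⟨m, rfl⟩ : ∃ m, ΔS = m + 3 := ⟨ΔS - 3, by omega⟩
  have e : m + 3 - 1 = m + 2 := rfl
  rw [e]
  have hD := maxDeg_ge v m
  have four : ∀ A : Finset (Fin 7), A.card = 4 → v ∈ A → (∀ x, ∃ a ∈ A, t2cl x a) →
      (∀ x y, x ≠ y → x ≠ v → y ≠ v → ∃ a ∈ A, ¬ (t2cl x a ↔ t2cl y a)) →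
      (idNum (appendStar T2graph v (m + 2)) : ℝ) ≤
      ((maxDeg (appendStar T2graph v (m + 2)) : ℝ) - 1) /
        (maxDeg (appendStar T2graph v (m + 2)) : ℝ) * ((7 : ℝ) + ((m + 3 : ℕ) : ℝ)) := by
    intro A hA hv h1 h2
    have := idNum_le A m v hv h1 h2
    refine final_ineq _ (m + 3) _ _ (by omega) hD ?_
    rw [hA] at this
    nlinarith
  have five : ∀ A : Finset (Fin 7), A.card = 5 → v ∈ A → (∀ x, ∃ a ∈ A, t2cl x a) →
      (∀ x y, x ≠ y → x ≠ v → y ≠ v → ∃ a ∈ A, ¬ (t2cl x a ↔ t2cl y a)) →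
      (1 ≤ m ∨ 4 ≤ maxDeg (appendStar T2graph v (m + 2))) →
      (idNum (appendStar T2graph v (m + 2)) : ℝ) ≤
      ((maxDeg (appendStar T2graph v (m + 2)) : ℝ) - 1) /
        (maxDeg (appendStar T2graph v (m + 2)) : ℝ) * ((7 : ℝ) + ((m + 3 : ℕ) : ℝ)) := by
    intro A hA hv h1 h2 h3
    have := idNum_le A m v hv h1 h2
    rw [hA] at this
    by_cases hm : 1 ≤ m
    · refine final_ineq _ (m + 3) _ _ (by omega) hD ?_
      nlinarith
    · refine final_ineq _ 4 _ _ (by omega) (h3.resolve_left hm) ?_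
      omega
  fin_cases v
  · exact four {0, 3, 4, 5} (by decide) (by decide) (by decide) (by decide)
  · exact four {1, 3, 4, 5} (by decide) (by decide) (by decide) (by decide)
  · exact four {1, 2, 5, 6} (by decide) (by decide) (by decide) (by decide)
  · refine five {0, 2, 3, 4, 5} (by decide) (by decide) (by decide) (by decide) (Or.inl ?_)
    by_contra hm
    exact hne ⟨rfl, by omega⟩
  · exact five {0, 2, 3, 4, 5} (by decide) (by decide) (by decide) (by decide)
      (Or.inr (maxDeg_ge_four m))
  · exact four {0, 2, 4, 5} (by decide) (by decide) (by decide) (by decide)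
  · exact four {0, 2, 4, 6} (by decide) (by decide) (by decide) (by decide)
end

section
/- Let Z be the tree on the 13 vertices {u₀, a₀, b₀, c₀, u₁, a₁, b₁, u₂, a₂, b₂, u₃, a₃, b₃} with edges u₀a₀, u₀b₀, u₀c₀, c₀u₁, u₁a₁, u₁b₁, a₀u₂, u₂a₂, u₂b₂, a₁u₃, u₃a₃, u₃b₃ (the unique subcubic appended 3-star of diameter 8 built from four 3-stars). Then γ^ID(Z) = 8, and in particular γ^ID(Z) < (2/3)·13. -/
open SimpleGraph

/-- The tree `Z`, the unique subcubic appended 3-star of diameter 8: vertices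
`u₀=0, a₀=1, b₀=2, c₀=3, u₁=4, a₁=5, b₁=6, u₂=7, a₂=8, b₂=9, u₃=10, a₃=11, b₃=12`. -/
def Zgraph : SimpleGraph (Fin 13) :=
  SimpleGraph.fromEdgeSet
    {s(0, 1), s(0, 2), s(0, 3), s(3, 4), s(4, 5), s(4, 6),
     s(1, 7), s(7, 8), s(7, 9), s(5, 10), s(10, 11), s(10, 12)}

/-- Explicit closed neighbourhoods of `Zgraph`. -/
def zNb : Fin 13 → Finset (Fin 13) :=
  ![{0, 1, 2, 3}, {0, 1, 7}, {0, 2}, {0, 3, 4}, {3, 4, 5, 6}, {4, 5, 10}, {4, 6},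
    {1, 7, 8, 9}, {7, 8}, {7, 9}, {5, 10, 11, 12}, {10, 11}, {10, 12}]

theorem mem_closedNbhd_Z (v i : Fin 13) : i ∈ closedNbhd Zgraph v ↔ i ∈ zNb v := by
  simp only [closedNbhd, Zgraph, Set.mem_insert_iff, SimpleGraph.mem_neighborSet,
    SimpleGraph.fromEdgeSet_adj, Set.mem_singleton_iff]
  revert v i
  decide

theorem closedNbhd_Z (v : Fin 13) : closedNbhd Zgraph v = (zNb v : Set (Fin 13)) := by
  ext i
  simpa using mem_closedNbhd_Z v i

theorem isIDCode_Z (C : Finset (Fin 13)) :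
    IsIDCode Zgraph (C : Set (Fin 13)) ↔
      (∀ v, (zNb v ∩ C).Nonempty) ∧ ∀ u w, u ≠ w → zNb u ∩ C ≠ zNb w ∩ C := by
  simp only [IsIDCode, closedNbhd_Z, ← Finset.coe_inter, Finset.coe_nonempty, ne_eq,
    Finset.coe_inj]

theorem dom_Z {C : Finset (Fin 13)} (h : ∀ v, (zNb v ∩ C).Nonempty) (v : Fin 13) :
    1 ≤ ∑ i ∈ zNb v, if i ∈ C then 1 else 0 := by
  rw [← Finset.card_filter, Finset.filter_mem_eq_inter]
  exact (h v).card_pos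

theorem sep_Z {C : Finset (Fin 13)} (h : ∀ u w, u ≠ w → zNb u ∩ C ≠ zNb w ∩ C)
    (u w : Fin 13) (huw : u ≠ w) :
    1 ≤ ∑ i ∈ symmDiff (zNb u) (zNb w), if i ∈ C then 1 else 0 := by
  rw [← Finset.card_filter, Finset.filter_mem_eq_inter, Nat.one_le_iff_ne_zero]
  intro h0
  rw [Finset.card_eq_zero] at h0
  apply h u w huw
  ext i
  have hi : i ∉ symmDiff (zNb u) (zNb w) ∩ C := by simp [h0]
  simp only [Finset.mem_inter, Finset.mem_symmDiff] at hi ⊢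
  tauto

theorem lower_Z (C : Finset (Fin 13))
    (h1 : ∀ v, (zNb v ∩ C).Nonempty) (h2 : ∀ u w, u ≠ w → zNb u ∩ C ≠ zNb w ∩ C) :
    8 ≤ C.card := by
  have hc : C.card = ∑ i, if i ∈ C then 1 else 0 := by
    rw [← Finset.card_filter]; simp
  have d := dom_Z h1
  have s := sep_Z h2
  generalize hx : (fun i : Fin 13 => if i ∈ C then 1 else 0) = x at *
  have hx1 : ∀ i, x i ≤ 1 := by
    intro i; rw [← hx]; dsimp only; split_ifs <;> simp
  have c (S : Finset (Fin 13)) (u w : Fin 13) (huw : u ≠ w)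
      (hS : symmDiff (zNb u) (zNb w) = S) : 1 ≤ ∑ i ∈ S, x i := hS ▸ s u w huw
  have d2 := d 2
  have d6 := d 6
  have d8 := d 8
  have d9 := d 9
  have d11 := d 11
  have d12 := d 12
  have s1 := c {8, 9} 8 9 (by decide) (by decide)
  have s2 := c {11, 12} 11 12 (by decide) (by decide)
  have s3 := c {1, 9} 7 8 (by decide) (by decide)
  have s4 := c {1, 8} 7 9 (by decide) (by decide)
  have s5 := c {5, 12} 10 11 (by decide) (by decide)
  have s6 := c {5, 11} 10 12 (by decide) (by decide)
  have s7 := c {1, 3} 0 2 (by decide) (by decide)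
  have s8 := c {3, 5} 4 6 (by decide) (by decide)
  have s9 := c {1, 2, 4} 0 3 (by decide) (by decide)
  have s10 := c {2, 3, 7} 0 1 (by decide) (by decide)
  have s11 := c {0, 5, 6} 3 4 (by decide) (by decide)
  have s12 := c {3, 6, 10} 4 5 (by decide) (by decide)

  have s14 := c {1, 2, 7} 1 2 (by decide) (by decide)
  have s15 := c {2, 3, 4} 2 3 (by decide) (by decide)
  have s16 := c {0, 3, 6} 3 6 (by decide) (by decide)
  have s17 := c {5, 6, 10} 5 6 (by decide) (by decide)
  have s18 := c {0, 1, 8} 1 8 (by decide) (by decide)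
  have s19 := c {0, 1, 9} 1 9 (by decide) (by decide)
  have s20 := c {4, 5, 11} 5 11 (by decide) (by decide)
  have s21 := c {4, 5, 12} 5 12 (by decide) (by decide)
  have d1 := d 1
  have d3 := d 3
  have d5 := d 5
  rw [hc]
  simp [zNb, Fin.sum_univ_succ] at *
  have e (i : Fin 13) : x i = 0 ∨ x i = 1 := by have := hx1 i; omega
  rcases e 0 with h0 | h0 <;> rcases e 1 with h1 | h1 <;> rcases e 3 with h3 | h3 <;>
    rcases e 4 with h4 | h4 <;> rcases e 5 with h5 | h5 <;> omega

/-- `γ^ID(Z) = 8 < (2/3)·13`. -/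
theorem stmt_13 : idNum Zgraph = 8 ∧ (idNum Zgraph : ℝ) < 2 / 3 * 13 := by
  have key : idNum Zgraph = 8 := by
    apply le_antisymm
    · apply Nat.sInf_le
      refine ⟨(({0, 1, 4, 5, 7, 8, 10, 11} : Finset (Fin 13)) : Set (Fin 13)), ?_, ?_⟩
      · rw [Set.ncard_coe_finset]; rfl
      · rw [isIDCode_Z]; decide
    · apply le_csInf
      · refine ⟨_, (({0, 1, 4, 5, 7, 8, 10, 11} : Finset (Fin 13)) : Set (Fin 13)), rfl, ?_⟩
        rw [isIDCode_Z]; decide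
      · rintro k ⟨C, rfl, hC⟩
        obtain ⟨D, rfl⟩ := C.toFinite.exists_finset_coe
        rw [isIDCode_Z] at hC
        rw [Set.ncard_coe_finset]
        exact lower_Z D hC.1 hC.2
  refine ⟨key, ?_⟩
  rw [key]; norm_num
end
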